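/- arXiv:math/0306354 — 4 statements merged into one kernel-verified Lean document; each statement's English description precedes it below -/
import Mathlib

section
/- The following are equivalent: (i) π is surjective onto the unit circle S¹; (ii) for every k ≥ 1 and all distinct words w, w' ∈ {1, …, d}^k one has Σ_{j=1}^{k} n_{w_j} d^{-j} ≠ Σ_{j=1}^{k} n_{w'_j} d^{-j}; (iii) lim_{k→∞} (card{Σ_{j=1}^{k} n_{w_j} d^{-j} : w ∈ {1, …, d}^k})^{1/k} = d; (iv) every fiber π^{-1}(p), p ∈ S¹, is finite; (v) the image of π has positive Haar measure in S¹. (This is the paper's Theorem on suitableness of coding maps, in the case f(z) = z^d.) -/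
open MeasureTheory

/-- The Haar probability measure on the unit circle `S¹ ⊆ ℂ`, realized as the
pushforward of Lebesgue measure on `[0,1)` under `x ↦ exp(2πix)`. -/
noncomputable def circleMeasure : Measure ℂ :=
  Measure.map (fun x : ℝ => Complex.exp (2 * Real.pi * Complex.I * (x : ℂ)))
    (volume.restrict (Set.Ico (0 : ℝ) 1))

/-- The coding map `π : {1,…,d}^ℕ → S¹`, `π(ω) = exp(2πi ∑ₖ n_{ω_k} d^{-k})`. -/
noncomputable def codingMap (d : ℕ) (n : Fin d → ℤ) (ω : ℕ → Fin d) : ℂ :=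
  Complex.exp (2 * Real.pi * Complex.I *
    ((∑' k : ℕ, (n (ω k) : ℝ) / (d : ℝ) ^ (k + 1) : ℝ) : ℂ))

/-! The set `T` of infinite digit sums is compact and self-similar: `T` is the union of the
translates `s + T / dᵏ`, over the values `s` of the digit sums of length `k`. If two words of length
`k` collide there are fewer than `dᵏ` translates, so `T` is a null set. If no words collide, then
the `dᵏ` digit sums of length `k` lie in `d⁻ᵏ ℤ`, hence are `d⁻ᵏ`-separated: their neighbourhoods of
radius `d⁻ᵏ / 2` have total measure `1` and shrink to `T`, so that `T` has measure at least `1`, and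
only boundedly many of them lie within a multiple of `d⁻ᵏ` of a given point, so that fibers are
finite. Conversely, if `v` and `w` collide, then putting `v` in front of a sequence maps the fiber
through `www...` injectively into itself; were this fiber finite, the map would be onto, and
`www...` would begin with `v`. The number of digit sums is submultiplicative in the length, so a
single collision lowers its growth rate. Finally, `T` modulo `1` is closed and mapped into itself by
`x ↦ d x`, which is ergodic on `ℝ / ℤ`; so it is a null set or everything. -/

open Filter Topology

lemma measure_thickening_of_separated {X : Type*} [PseudoMetricSpace X] [MeasurableSpace X]
    [OpensMeasurableSpace X] (μ : Measure X) {S : Finset X} {δ : ℝ}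
    (hS : (S : Set X).Pairwise fun x y => δ + δ ≤ dist x y) :
    μ (Metric.thickening δ S) = ∑ x ∈ S, μ (Metric.ball x δ) := by
  rw [Metric.thickening_eq_biUnion_ball]
  exact measure_biUnion_finset (fun x hx y hy hxy => Metric.ball_disjoint_ball (hS hx hy hxy))
    fun _ _ => Metric.isOpen_ball.measurableSet

lemma volume_thickening_of_separated {S : Set ℝ} (hfin : S.Finite) {ε : ℝ}
    (hS : S.Pairwise fun x y => ε ≤ dist x y) :
    volume (Metric.thickening (ε / 2) S) = S.ncard * ENNReal.ofReal ε := by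
  lift S to Finset ℝ using hfin
  rw [measure_thickening_of_separated volume (by simpa only [add_halves] using hS)]
  simp [mul_div_cancel₀, Set.ncard_coe_finset]

lemma ncard_mul_le_of_separated {S : Set ℝ} (hfin : S.Finite) {ε r y : ℝ} (hε : 0 ≤ ε)
    (hr : 0 ≤ r) (hS : S.Pairwise fun x z => ε ≤ dist x z) (hball : S ⊆ Metric.closedBall y r) :
    S.ncard * ε ≤ 2 * r + ε := by
  have hthick : Metric.thickening (ε / 2) S ⊆ Metric.closedBall y (r + ε / 2) := by
    intro x hx
    obtain ⟨s, hs, hxs⟩ := Metric.mem_thickening_iff.1 hx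
    rw [add_comm]
    exact (dist_triangle x s y).trans (add_le_add hxs.le (hball hs))
  have hvol := measure_mono (μ := volume) hthick
  rw [volume_thickening_of_separated hfin hS, Real.volume_closedBall, ← ENNReal.ofReal_natCast,
    ← ENNReal.ofReal_mul (Nat.cast_nonneg _), ENNReal.ofReal_le_ofReal_iff (by positivity)] at hvol
  linarith

lemma pow_le_of_tendsto_rpow_inv {u : ℕ → ℝ} {L : ℝ} (hu : ∀ k, 0 ≤ u k)
    (hmul : ∀ k l, u (k + l) ≤ u k * u l)
    (hL : Tendsto (fun k : ℕ => u k ^ (k : ℝ)⁻¹) atTop (𝓝 L)) {k : ℕ} (hk : k ≠ 0) :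
    L ^ k ≤ u k := by
  have hpow : ∀ m : ℕ, u (k * (m + 1)) ≤ u k ^ (m + 1) := by
    intro m
    induction m with
    | zero => simp
    | succ m ih =>
      rw [mul_add_one, pow_succ]
      exact (hmul _ _).trans (mul_le_mul_of_nonneg_right ih (hu k))
  have hL_nonneg : 0 ≤ L := ge_of_tendsto' hL fun j => Real.rpow_nonneg (hu j) _
  have hsub : Tendsto (fun m : ℕ => k * (m + 1)) atTop atTop :=
    (tendsto_add_atTop_nat 1).const_mul_atTop' (Nat.pos_of_ne_zero hk)
  have hroot : L ≤ u k ^ (k : ℝ)⁻¹ := le_of_tendsto' (hL.comp hsub) fun m => calc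
    u (k * (m + 1)) ^ ((k * (m + 1) : ℕ) : ℝ)⁻¹
        ≤ (u k ^ (m + 1)) ^ ((k * (m + 1) : ℕ) : ℝ)⁻¹ :=
          Real.rpow_le_rpow (hu _) (hpow m) (by positivity)
    _ = ((u k ^ (m + 1)) ^ (((m + 1 : ℕ) : ℝ)⁻¹)) ^ (k : ℝ)⁻¹ := by
          rw [← Real.rpow_mul (pow_nonneg (hu k) _), ← mul_inv, mul_comm k, Nat.cast_mul]
    _ = u k ^ (k : ℝ)⁻¹ := by rw [Real.pow_rpow_inv_natCast (hu k) m.succ_ne_zero]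
  calc L ^ k ≤ (u k ^ (k : ℝ)⁻¹) ^ k := pow_le_pow_left₀ hL_nonneg hroot k
    _ = u k := Real.rpow_inv_natCast_pow (hu k) hk

section AddCircle

variable {T : ℝ}

lemma finite_inter_preimage_addCircle_coe {K : Set ℝ} (hK : IsCompact K) (x : AddCircle T) :
    (K ∩ (↑) ⁻¹' {x}).Finite :=
  (hK.inter_right (isClosed_singleton.preimage (AddCircle.continuous_mk' T))).finite
    (IsDiscrete.mono ⟨(AddCircle.isCoveringMap_coe T x).discreteTopology_fiber⟩
      Set.inter_subset_right)

variable [Fact (0 < T)]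

lemma volume_addCircle_eq_volume_preimage_inter_Ioc (E : Set (AddCircle T)) (t : ℝ) :
    volume E = volume ((↑) ⁻¹' E ∩ Set.Ioc t (t + T)) := by
  have himage : Subtype.val '' ((AddCircle.measurableEquivIoc T t).symm ⁻¹' E) =
      (↑) ⁻¹' E ∩ Set.Ioc t (t + T) := by
    ext x
    constructor
    · rintro ⟨y, hy, rfl⟩
      exact ⟨hy, y.2⟩
    · rintro ⟨hx, hxt⟩
      exact ⟨⟨x, hxt⟩, hx, rfl⟩
  have hmp : MeasurePreserving (AddCircle.measurableEquivIoc T t) volume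
      (Measure.comap Subtype.val volume) := AddCircle.measurePreserving_equivIoc T
  rw [← himage, ← comap_subtype_coe_apply measurableSet_Ioc, hmp.symm.measure_preimage_equiv]

lemma volume_preimage_addCircle_coe_eq_zero_iff {E : Set (AddCircle T)} :
    volume ((↑) ⁻¹' E : Set ℝ) = 0 ↔ volume E = 0 := by
  rw [volume_addCircle_eq_volume_preimage_inter_Ioc E 0]
  refine ⟨measure_mono_null Set.inter_subset_left,
    (isAddFundamentalDomain_Ioc Fact.out 0).measure_zero_of_invariant _ fun g => ?_⟩
  ext x
  simp [Set.mem_vadd_set_iff_neg_vadd_mem, AddSubgroup.vadd_def,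
    (QuotientAddGroup.eq_zero_iff (g : ℝ)).2 g.2]

lemma volume_image_addCircle_coe_eq_zero_iff {K : Set ℝ} :
    volume ((↑) '' K : Set (AddCircle T)) = 0 ↔ volume K = 0 := by
  rw [← volume_preimage_addCircle_coe_eq_zero_iff]
  refine ⟨measure_mono_null (Set.subset_preimage_image _ K), fun hK => ?_⟩
  rw [QuotientAddGroup.preimage_image_mk_eq_iUnion_image]
  refine measure_iUnion_null fun x => ?_
  rw [Set.image_add_right, measure_preimage_add_right, hK]

lemma eq_univ_of_isClosed_of_mapsTo_nsmul {A : Set (AddCircle T)} (hA : IsClosed A)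
    (hvol : volume A ≠ 0) {m : ℕ} (hm : 1 < m) (hmaps : Set.MapsTo (fun x => m • x) A A) :
    A = Set.univ := by
  rcases (AddCircle.ergodic_nsmul hm).ae_empty_or_univ_of_ae_le_preimage
    hA.nullMeasurableSet (Eventually.of_forall hmaps) with hnull | hfull
  · exact absurd (ae_eq_empty.1 hnull) hvol
  · exact hA.ae_eq_univ_iff_eq.1 hfull

end AddCircle

namespace DigitExpansion

variable {ι : Type*} {k l : ℕ}

section Words

/-- The word formed by the first `k` letters of a sequence. -/
def initialWord (k : ℕ) (ω : ℕ → ι) : Fin k → ι := fun j => ω j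

/-- The sequence that reads the word `w` first and then the sequence `ω`. -/
def prepend (w : Fin k → ι) (ω : ℕ → ι) : ℕ → ι :=
  fun j => if hj : j < k then w ⟨j, hj⟩ else ω (j - k)

lemma initialWord_prepend (w : Fin k → ι) (ω : ℕ → ι) : initialWord k (prepend w ω) = w := by
  ext j
  simp [initialWord, prepend]

lemma prepend_apply_add (w : Fin k → ι) (ω : ℕ → ι) (j : ℕ) : prepend w ω (j + k) = ω j := by
  simp [prepend]

lemma prepend_injective (w : Fin k → ι) : Function.Injective (prepend w) := by
  intro ω ω' h
  ext j
  rw [← prepend_apply_add w ω, h, prepend_apply_add]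

lemma exists_prepend_eq_self (hk : k ≠ 0) (w : Fin k → ι) : ∃ ω, prepend w ω = ω := by
  refine ⟨fun j => w ⟨j % k, Nat.mod_lt j (Nat.pos_of_ne_zero hk)⟩, funext fun j => ?_⟩
  by_cases hj : j < k
  · simp only [prepend, hj, dite_true, Nat.mod_eq_of_lt]
  · simp only [prepend, hj, dite_false, Nat.mod_eq_sub_mod (not_lt.1 hj)]

lemma exists_injOn_initialWord (F : Finset (ℕ → ι)) :
    ∃ k : ℕ, Set.InjOn (initialWord k) (F : Set (ℕ → ι)) := by
  have hsep : ∀ᶠ k in atTop, ∀ ω ∈ F, ∀ ω' ∈ F, initialWord k ω = initialWord k ω' → ω = ω' := by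
    refine (Finset.eventually_all F).2 fun ω _ => (Finset.eventually_all F).2 fun ω' _ => ?_
    by_cases hne : ω = ω'
    · exact Eventually.of_forall fun _ _ => hne
    · obtain ⟨j, hj⟩ := Function.ne_iff.1 hne
      filter_upwards [eventually_gt_atTop j] with k hjk heq
      exact absurd (congrFun heq ⟨j, hjk⟩) hj
  obtain ⟨k, hk⟩ := hsep.exists
  exact ⟨k, fun ω hω ω' hω' => hk ω hω ω' hω'⟩

end Words

section WordSum

variable {K : Type*} [Field K] (b : K) (a : ι → K)

/-- The finite digit expansion `∑_{j < k} a(w_j) b^{-(j+1)}` of a word `w` of length `k`, in base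
`b` and with the digits `a`. Letters are indexed from `0`. -/
def wordSum (w : Fin k → ι) : K := ∑ j : Fin k, a (w j) / b ^ ((j : ℕ) + 1)

/-- The set of values of all digit expansions of length `k`. -/
def wordSums (k : ℕ) : Set K := Set.range (wordSum b a (k := k))

lemma wordSum_append (v : Fin k → ι) (w : Fin l → ι) :
    wordSum b a (Fin.append v w) = wordSum b a v + wordSum b a w / b ^ k := by
  simp only [wordSum, Fin.sum_univ_add, Fin.append_left, Fin.append_right, Fin.val_castAdd,
    Fin.val_natAdd, Finset.sum_div, div_div, ← pow_add]
  congr! 4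
  ring

lemma wordSum_initialWord (ω : ℕ → ι) (k : ℕ) :
    wordSum b a (initialWord k ω) = ∑ j ∈ Finset.range k, a (ω j) / b ^ (j + 1) :=
  Fin.sum_univ_eq_sum_range (fun j => a (ω j) / b ^ (j + 1)) k

lemma forall_wordSum_ne_iff :
    (∀ k : ℕ, 1 ≤ k → ∀ w w' : Fin k → ι, w ≠ w' → wordSum b a w ≠ wordSum b a w') ↔
      ∀ k, Function.Injective (wordSum b a (k := k)) := by
  refine ⟨fun h k w w' hww' => ?_, fun h k _ w w' hne => (h k).ne hne⟩
  rcases Nat.eq_zero_or_pos k with rfl | hk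
  · exact Subsingleton.elim w w'
  · exact not_imp_not.1 (h k hk w w') hww'

variable [Finite ι]

lemma finite_wordSums (k : ℕ) : (wordSums b a k).Finite := Set.finite_range _

lemma ncard_wordSums_le (k : ℕ) : (wordSums b a k).ncard ≤ Nat.card ι ^ k := by
  rw [wordSums, ← Set.image_univ]
  simpa [Nat.card_fun] using Set.ncard_image_le (f := wordSum b a (k := k)) Set.finite_univ

lemma ncard_wordSums_eq_iff :
    (wordSums b a k).ncard = Nat.card ι ^ k ↔ Function.Injective (wordSum b a (k := k)) := by
  rw [wordSums, ← Set.image_univ, ← Set.injOn_univ, ← Set.ncard_image_iff Set.finite_univ,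
    Set.ncard_univ, Nat.card_fun, Nat.card_fin]

lemma ncard_wordSums_add_le (k l : ℕ) :
    (wordSums b a (k + l)).ncard ≤ (wordSums b a k).ncard * (wordSums b a l).ncard := by
  have hsub : wordSums b a (k + l) ⊆
      (fun p : K × K => p.1 + p.2 / b ^ k) '' wordSums b a k ×ˢ wordSums b a l := by
    rintro _ ⟨w, rfl⟩
    refine ⟨(wordSum b a fun i => w (Fin.castAdd l i), wordSum b a fun i => w (Fin.natAdd k i)),
      ⟨⟨_, rfl⟩, ⟨_, rfl⟩⟩, ?_⟩
    simp only [← wordSum_append, Fin.append_castAdd_natAdd]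
  have hfin := (finite_wordSums b a k).prod (finite_wordSums b a l)
  rw [← Set.ncard_prod]
  exact (Set.ncard_le_ncard hsub (hfin.image _)).trans (Set.ncard_image_le hfin)

theorem tendsto_ncard_wordSums_rpow_inv_iff :
    Tendsto (fun k : ℕ => ((wordSums b a k).ncard : ℝ) ^ (k : ℝ)⁻¹) atTop (𝓝 (Nat.card ι)) ↔
      ∀ k, Function.Injective (wordSum b a (k := k)) := by
  simp only [← ncard_wordSums_eq_iff]
  constructor
  · intro h k
    rcases eq_or_ne k 0 with rfl | hk
    · exact (ncard_wordSums_eq_iff b a).2 (Function.injective_of_subsingleton _)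
    · refine (ncard_wordSums_le b a k).antisymm ?_
      exact_mod_cast pow_le_of_tendsto_rpow_inv (fun k => Nat.cast_nonneg _)
        (fun k l => by exact_mod_cast ncard_wordSums_add_le b a k l) h hk
  · intro h
    refine tendsto_const_nhds.congr' ?_
    filter_upwards [eventually_ne_atTop 0] with k hk
    rw [h, Nat.cast_pow, Real.pow_rpow_inv_natCast (Nat.cast_nonneg _) hk]

end WordSum

section SeqSum

lemma hasSum_div_pow_succ {r : ℝ} (hr : 1 < r) (C : ℝ) :
    HasSum (fun j : ℕ => C / r ^ (j + 1)) (C / (r - 1)) := by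
  have hr0 : r ≠ 0 := by positivity
  have hr1 : r - 1 ≠ 0 := (sub_pos.2 hr).ne'
  convert! (hasSum_geometric_of_lt_one (inv_nonneg.2 (zero_le_one.trans hr.le))
    (inv_lt_one_of_one_lt₀ hr)).mul_left (C / r) using 1
  · ext j
    rw [pow_succ', inv_pow, ← div_eq_mul_inv, div_div]
  · field_simp

open scoped Pointwise

variable {𝕜 : Type*} [NormedField 𝕜] {b : 𝕜}

/-- The infinite digit expansion `∑_j a(ω_j) b^{-(j+1)}` of a sequence `ω`, in base `b` and with
the digits `a`. -/
noncomputable def seqSum (b : 𝕜) (a : ι → 𝕜) (ω : ℕ → ι) : 𝕜 := ∑' j : ℕ, a (ω j) / b ^ (j + 1)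

lemma norm_div_pow_succ_le [Fintype ι] (b : 𝕜) (a : ι → 𝕜) (ω : ℕ → ι) (j : ℕ) :
    ‖a (ω j) / b ^ (j + 1)‖ ≤ ‖a‖ / ‖b‖ ^ (j + 1) := by
  rw [norm_div, norm_pow]
  gcongr
  exact norm_le_pi_norm a (ω j)

lemma norm_seqSum_le [Fintype ι] (hb : 1 < ‖b‖) (a : ι → 𝕜) (ω : ℕ → ι) :
    ‖seqSum b a ω‖ ≤ ‖a‖ / (‖b‖ - 1) :=
  tsum_of_norm_bounded (hasSum_div_pow_succ hb ‖a‖) (norm_div_pow_succ_le b a ω)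

variable [CompleteSpace 𝕜]

section Finite

variable [Finite ι]

lemma isCompact_range_seqSum (hb : 1 < ‖b‖) (a : ι → 𝕜) : IsCompact (Set.range (seqSum b a)) := by
  cases nonempty_fintype ι
  let _ : TopologicalSpace ι := ⊥
  have : DiscreteTopology ι := ⟨rfl⟩
  refine isCompact_range (continuous_tsum (fun j => ?_) (hasSum_div_pow_succ hb ‖a‖).summable
    fun j ω => norm_div_pow_succ_le b a ω j)
  exact (continuous_of_discreteTopology (f := fun i => a i / b ^ (j + 1))).comp
    (continuous_apply j)

lemma seqSum_eq_wordSum_add (hb : 1 < ‖b‖) (a : ι → 𝕜) (k : ℕ) (ω : ℕ → ι) :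
    seqSum b a ω =
      wordSum b a (initialWord k ω) + seqSum b a (fun j => ω (j + k)) / b ^ k := by
  cases nonempty_fintype ι
  have hsum : Summable fun j => a (ω j) / b ^ (j + 1) :=
    (hasSum_div_pow_succ hb ‖a‖).summable.of_norm_bounded (norm_div_pow_succ_le b a ω)
  rw [wordSum_initialWord, seqSum, ← hsum.sum_add_tsum_nat_add k, seqSum, ← tsum_div_const]
  simp only [div_div, ← pow_add, add_right_comm _ k 1]

lemma seqSum_prepend (hb : 1 < ‖b‖) (a : ι → 𝕜) (w : Fin k → ι) (ω : ℕ → ι) :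
    seqSum b a (prepend w ω) = wordSum b a w + seqSum b a ω / b ^ k := by
  simp only [seqSum_eq_wordSum_add hb a k (prepend w ω), initialWord_prepend, prepend_apply_add]

lemma range_seqSum_eq_iUnion (hb : 1 < ‖b‖) (a : ι → 𝕜) (k : ℕ) :
    Set.range (seqSum b a) = ⋃ s ∈ wordSums b a k, s +ᵥ (b ^ k)⁻¹ • Set.range (seqSum b a) := by
  ext x
  simp only [wordSums, Set.mem_iUnion, Set.mem_range, Set.mem_vadd_set, Set.mem_smul_set,
    exists_exists_eq_and, exists_prop, vadd_eq_add, smul_eq_mul, inv_mul_eq_div]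
  constructor
  · rintro ⟨ω, rfl⟩
    exact ⟨initialWord k ω, _, (seqSum_eq_wordSum_add hb a k ω).symm⟩
  · rintro ⟨w, ω, rfl⟩
    exact ⟨prepend w ω, seqSum_prepend hb a w ω⟩

lemma injective_wordSum_of_finite_fibers (hb : 1 < ‖b‖) {a : ι → 𝕜}
    (h : ∀ y, (seqSum b a ⁻¹' {y}).Finite) (k : ℕ) :
    Function.Injective (wordSum b a (k := k)) := by
  rcases eq_or_ne k 0 with rfl | hk
  · exact Function.injective_of_subsingleton _
  intro v w hvw
  obtain ⟨ω, hω⟩ := exists_prepend_eq_self hk w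
  set A := seqSum b a ⁻¹' {seqSum b a ω}
  have hmaps : Set.MapsTo (prepend v) A A := by
    intro ω' (hω' : seqSum b a ω' = seqSum b a ω)
    change seqSum b a (prepend v ω') = seqSum b a ω
    rw [seqSum_prepend hb, hvw, hω', ← seqSum_prepend hb, hω]
  have hsurj : Set.SurjOn (prepend v) A A :=
    (((h _).injOn_iff_bijOn_of_mapsTo hmaps).1 (prepend_injective v).injOn).surjOn
  obtain ⟨ω', -, hω'⟩ := hsurj (show ω ∈ A from rfl)
  rw [← initialWord_prepend v ω', hω', ← hω, initialWord_prepend]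

end Finite

lemma dist_wordSum_seqSum_le [Fintype ι] (hb : 1 < ‖b‖) (a : ι → 𝕜) (k : ℕ) (ω : ℕ → ι) :
    dist (wordSum b a (initialWord k ω)) (seqSum b a ω) ≤ ‖a‖ / (‖b‖ - 1) / ‖b‖ ^ k := by
  rw [seqSum_eq_wordSum_add hb a k ω, dist_self_add_right, norm_div, norm_pow]
  gcongr
  exact norm_seqSum_le hb a _

lemma thickening_wordSums_subset_cthickening [Fintype ι] [Nonempty ι] (hb : 1 < ‖b‖)
    (a : ι → 𝕜) (k : ℕ) (δ : ℝ) : Metric.thickening δ (wordSums b a k) ⊆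
      Metric.cthickening (δ + ‖a‖ / (‖b‖ - 1) / ‖b‖ ^ k) (Set.range (seqSum b a)) := by
  intro x hx
  obtain ⟨_, ⟨w, rfl⟩, hxw⟩ := Metric.mem_thickening_iff.1 hx
  let ω := prepend w fun _ => Classical.arbitrary ι
  have hdist := dist_wordSum_seqSum_le hb a k ω
  rw [initialWord_prepend] at hdist
  exact Metric.mem_cthickening_of_dist_le x _ _ _ ⟨ω, rfl⟩
    ((dist_triangle _ _ _).trans (add_le_add hxw.le hdist))

end SeqSum

open scoped Pointwise in
lemma volume_range_seqSum_eq_zero [Finite ι] {b : ℝ} (hb : 1 < ‖b‖) {a : ι → ℝ}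
    (hlt : (wordSums b a k).ncard < ‖b‖ ^ k) : volume (Set.range (seqSum b a)) = 0 := by
  set T := Set.range (seqSum b a) with hT
  have hfin := finite_wordSums b a k
  have hpow : (0 : ℝ) < ‖b‖ ^ k := by positivity
  have hle : volume T ≤ ENNReal.ofReal ((wordSums b a k).ncard / ‖b‖ ^ k) * volume T := calc
    volume T = volume (⋃ s ∈ hfin.toFinset, s +ᵥ (b ^ k)⁻¹ • T) := by
      simp only [Set.Finite.mem_toFinset, hT, ← range_seqSum_eq_iUnion hb a k]
    _ ≤ ∑ s ∈ hfin.toFinset, volume (s +ᵥ (b ^ k)⁻¹ • T) := measure_biUnion_finset_le _ _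
    _ = (wordSums b a k).ncard * (ENNReal.ofReal (‖b‖ ^ k)⁻¹ * volume T) := by
      simp only [measure_vadd, Measure.addHaar_smul, Finset.sum_const, nsmul_eq_mul,
        Set.ncard_eq_toFinset_card _ hfin, Module.finrank_self, pow_one, abs_inv, abs_pow,
        Real.norm_eq_abs]
    _ = ENNReal.ofReal ((wordSums b a k).ncard / ‖b‖ ^ k) * volume T := by
      rw [← mul_assoc, ← ENNReal.ofReal_natCast, ← ENNReal.ofReal_mul (Nat.cast_nonneg _),
        div_eq_mul_inv]
  have hlt_one : ENNReal.ofReal ((wordSums b a k).ncard / ‖b‖ ^ k) < 1 := by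
    rwa [ENNReal.ofReal_lt_one, div_lt_one hpow]
  by_contra hvol
  refine hle.not_gt ?_
  simpa only [one_mul] using ENNReal.mul_lt_mul_left hvol
    (isCompact_range_seqSum hb a).measure_lt_top.ne hlt_one

section IntegerDigits

lemma exists_wordSum_eq_intCast_div {b : ℕ} (hb : b ≠ 0) (n : ι → ℤ) (w : Fin k → ι) :
    ∃ z : ℤ, wordSum (b : ℝ) (fun i => (n i : ℝ)) w = z / (b : ℝ) ^ k := by
  refine ⟨∑ j : Fin k, n (w j) * (b : ℤ) ^ (k - (j + 1)), ?_⟩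
  push_cast
  rw [wordSum, Finset.sum_div]
  refine Finset.sum_congr rfl fun j _ => ?_
  rw [div_eq_div_iff (by positivity) (by positivity), mul_assoc, ← pow_add, Nat.sub_add_cancel j.2]

lemma pairwise_wordSums_le_dist {b : ℕ} (hb : b ≠ 0) (n : ι → ℤ) (k : ℕ) :
    (wordSums (b : ℝ) (fun i => (n i : ℝ)) k).Pairwise fun x y => 1 / (b : ℝ) ^ k ≤ dist x y := by
  rintro _ ⟨v, rfl⟩ _ ⟨w, rfl⟩ hvw
  obtain ⟨x, hx⟩ := exists_wordSum_eq_intCast_div hb n v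
  obtain ⟨y, hy⟩ := exists_wordSum_eq_intCast_div hb n w
  rw [hx, hy] at hvw ⊢
  have hxy : x ≠ y := fun h => hvw (by rw [h])
  rw [Real.dist_eq, ← sub_div, abs_div, abs_of_nonneg (by positivity : (0 : ℝ) ≤ (b : ℝ) ^ k)]
  gcongr
  exact_mod_cast Int.one_le_abs (sub_ne_zero.2 hxy)

variable {b : ℕ} {n : ι → ℤ}

lemma card_le_of_subset_seqSum_fiber [Fintype ι] (hb : 1 < b)
    (hinj : ∀ k, Function.Injective (wordSum (b : ℝ) (fun i => (n i : ℝ)) (k := k))) {y : ℝ}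
    {F : Finset (ℕ → ι)} (hF : ↑F ⊆ seqSum (b : ℝ) (fun i => (n i : ℝ)) ⁻¹' {y}) :
    F.card ≤ 2 * (‖fun i => (n i : ℝ)‖ / ((b : ℝ) - 1)) + 1 := by
  set a : ι → ℝ := fun i => n i
  have hb' : 1 < ‖(b : ℝ)‖ := by simpa using hb
  set C : ℝ := ‖a‖ / ((b : ℝ) - 1)
  have hC : 0 ≤ C := div_nonneg (norm_nonneg a) (sub_pos.2 (by exact_mod_cast hb)).le
  obtain ⟨k, hk⟩ := exists_injOn_initialWord F
  have hcard : ((wordSum (b : ℝ) a ∘ initialWord k) '' (F : Set (ℕ → ι))).ncard = F.card := by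
    rw [((hinj k).comp_injOn hk).ncard_image, Set.ncard_coe_finset]
  have hball : (wordSum (b : ℝ) a ∘ initialWord k) '' F ⊆
      Metric.closedBall y (C / (b : ℝ) ^ k) := by
    rintro _ ⟨ω, hω, rfl⟩
    simpa only [Real.norm_natCast, show seqSum (b : ℝ) a ω = y from hF hω, Metric.mem_closedBall,
      Function.comp_apply] using
      dist_wordSum_seqSum_le hb' a k ω
  have hsep : ((wordSum (b : ℝ) a ∘ initialWord k) '' (F : Set (ℕ → ι))).Pairwise
      fun x z => 1 / (b : ℝ) ^ k ≤ dist x z :=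
    (pairwise_wordSums_le_dist (by omega) n k).mono
      (Set.image_subset_iff.2 fun ω _ => Set.mem_range_self (initialWord k ω))
  have hle := ncard_mul_le_of_separated (F.finite_toSet.image _) (by positivity) (by positivity)
    hsep hball
  have hpow : (0 : ℝ) < (b : ℝ) ^ k := by positivity
  rw [hcard] at hle
  field_simp at hle
  exact hle

variable [Finite ι]

lemma one_le_volume_range_seqSum (hb : 1 < b) (hcard : b ≤ Nat.card ι)
    (hinj : ∀ k, Function.Injective (wordSum (b : ℝ) (fun i => (n i : ℝ)) (k := k))) :
    1 ≤ volume (Set.range (seqSum (b : ℝ) fun i => (n i : ℝ))) := by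
  cases nonempty_fintype ι
  set a : ι → ℝ := fun i => n i
  have hb' : 1 < ‖(b : ℝ)‖ := by simpa using hb
  have : Nonempty ι := (Nat.card_pos_iff.1 (by omega)).1
  set R : ℕ → ℝ := fun k => 1 / (b : ℝ) ^ k / 2 + ‖a‖ / (‖(b : ℝ)‖ - 1) / ‖(b : ℝ)‖ ^ k with hR
  have hone : ∀ k, 1 ≤ volume (Metric.thickening (1 / (b : ℝ) ^ k / 2) (wordSums (b : ℝ) a k)) := by
    intro k
    rw [volume_thickening_of_separated (finite_wordSums _ _ k)
      (pairwise_wordSums_le_dist (by omega) n k), (ncard_wordSums_eq_iff _ a).2 (hinj k),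
      ← ENNReal.ofReal_natCast, ← ENNReal.ofReal_mul (Nat.cast_nonneg _), ENNReal.one_le_ofReal,
      mul_one_div, one_le_div (by positivity)]
    exact_mod_cast Nat.pow_le_pow_left hcard k
  have hR_tendsto : Tendsto R atTop (𝓝 0) := by
    have hpow : Tendsto (fun k : ℕ => (b : ℝ) ^ k) atTop atTop :=
      tendsto_pow_atTop_atTop_of_one_lt (by exact_mod_cast hb)
    simpa only [hR, Real.norm_natCast, zero_div, add_zero] using
      ((hpow.const_div_atTop 1).div_const 2).add (hpow.const_div_atTop _)
  exact ge_of_tendsto'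
    ((tendsto_measure_cthickening_of_isCompact (isCompact_range_seqSum hb' a)).comp hR_tendsto)
    fun k => (hone k).trans (measure_mono (thickening_wordSums_subset_cthickening hb' a k _))

lemma volume_range_seqSum_ne_zero_iff (hb : 1 < b) (hcard : Nat.card ι = b) :
    volume (Set.range (seqSum (b : ℝ) fun i => (n i : ℝ))) ≠ 0 ↔
      ∀ k, Function.Injective (wordSum (b : ℝ) (fun i => (n i : ℝ)) (k := k)) := by
  refine ⟨fun hvol k => ?_, fun hinj =>
    (one_pos.trans_le (one_le_volume_range_seqSum hb hcard.ge hinj)).ne'⟩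
  contrapose! hvol
  refine volume_range_seqSum_eq_zero (k := k) (by simpa using hb) ?_
  rw [Real.norm_natCast]
  exact_mod_cast hcard ▸ (ncard_wordSums_le _ _ k).lt_of_ne
    (mt (ncard_wordSums_eq_iff _ _).1 hvol)

lemma finite_seqSum_fiber_iff (hb : 1 < b) :
    (∀ y, (seqSum (b : ℝ) (fun i => (n i : ℝ)) ⁻¹' {y}).Finite) ↔
      ∀ k, Function.Injective (wordSum (b : ℝ) (fun i => (n i : ℝ)) (k := k)) := by
  refine ⟨injective_wordSum_of_finite_fibers (by simpa using hb), fun hinj y => ?_⟩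
  cases nonempty_fintype ι
  by_contra hinf
  obtain ⟨F, hF, hcard⟩ := Set.Infinite.exists_subset_card_eq hinf
    (⌊2 * (‖fun i => (n i : ℝ)‖ / ((b : ℝ) - 1)) + 1⌋₊ + 1)
  have hle := card_le_of_subset_seqSum_fiber hb hinj hF
  rw [hcard, Nat.cast_add_one] at hle
  exact (Nat.lt_floor_add_one _).not_ge hle

end IntegerDigits

section ModOne

/-- The infinite digit expansion of a sequence, in an integer base and with integer digits, taken
modulo `1`. Passing to `ℝ / ℤ` makes multiplication by the base act on it as the shift. -/
noncomputable def seqSumModOne (b : ℕ) (n : ι → ℤ) (ω : ℕ → ι) : UnitAddCircle :=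
  (seqSum (b : ℝ) (fun i => (n i : ℝ)) ω : ℝ)

lemma range_seqSumModOne (b : ℕ) (n : ι → ℤ) :
    Set.range (seqSumModOne b n) = (↑) '' Set.range (seqSum (b : ℝ) fun i => (n i : ℝ)) :=
  Set.range_comp _ _

lemma volume_range_seqSumModOne_ne_zero_iff (b : ℕ) (n : ι → ℤ) :
    volume (Set.range (seqSumModOne b n)) ≠ 0 ↔
      volume (Set.range (seqSum (b : ℝ) fun i => (n i : ℝ))) ≠ 0 := by
  rw [range_seqSumModOne, Ne, volume_image_addCircle_coe_eq_zero_iff]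

variable [Finite ι] {b : ℕ}

lemma nsmul_seqSumModOne (hb : 1 < b) (n : ι → ℤ) (ω : ℕ → ι) :
    b • seqSumModOne b n ω = seqSumModOne b n (fun j => ω (j + 1)) := by
  have hb' : 1 < ‖(b : ℝ)‖ := by simpa using hb
  have hshift : b • seqSum (b : ℝ) (fun i => (n i : ℝ)) ω =
      n (ω 0) • (1 : ℝ) + seqSum (b : ℝ) (fun i => (n i : ℝ)) (fun j => ω (j + 1)) := by
    have hb0 : (b : ℝ) ≠ 0 := by positivity
    rw [seqSum_eq_wordSum_add hb' _ 1 ω, wordSum_initialWord]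
    simp only [Finset.sum_range_one, zero_add, pow_one, nsmul_eq_mul, zsmul_eq_mul, mul_one]
    field_simp
  rw [seqSumModOne, ← AddCircle.coe_nsmul, hshift, AddCircle.coe_add, AddCircle.coe_zsmul,
    AddCircle.coe_period, smul_zero, zero_add, seqSumModOne]

lemma isClosed_range_seqSumModOne (hb : 1 < b) (n : ι → ℤ) :
    IsClosed (Set.range (seqSumModOne b n)) := by
  rw [range_seqSumModOne]
  exact ((isCompact_range_seqSum (by simpa using hb) _).image
    (AddCircle.continuous_mk' 1)).isClosed

lemma range_seqSumModOne_eq_univ_iff (hb : 1 < b) (n : ι → ℤ) :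
    Set.range (seqSumModOne b n) = Set.univ ↔ volume (Set.range (seqSumModOne b n)) ≠ 0 := by
  refine ⟨fun h => ?_, fun h => ?_⟩
  · rw [h, UnitAddCircle.measure_univ]
    exact one_ne_zero
  · refine eq_univ_of_isClosed_of_mapsTo_nsmul (isClosed_range_seqSumModOne hb n) h hb ?_
    rintro _ ⟨ω, rfl⟩
    exact ⟨_, (nsmul_seqSumModOne hb n ω).symm⟩

lemma finite_seqSumModOne_fiber_iff (hb : 1 < b) (n : ι → ℤ) :
    (∀ x, (seqSumModOne b n ⁻¹' {x}).Finite) ↔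
      ∀ y, (seqSum (b : ℝ) (fun i => (n i : ℝ)) ⁻¹' {y}).Finite := by
  refine ⟨fun h y => (h y).subset fun ω hω => ?_, fun h x => ?_⟩
  · exact congrArg ((↑) : ℝ → UnitAddCircle) hω
  · have hb' : 1 < ‖(b : ℝ)‖ := by simpa using hb
    have hfin := finite_inter_preimage_addCircle_coe
      (isCompact_range_seqSum hb' fun i => (n i : ℝ)) x
    exact (hfin.preimage' fun y _ => h y).subset fun ω hω => ⟨⟨ω, rfl⟩, hω⟩

end ModOne

section CodingMap

/-- The embedding `x ↦ exp(2πix)` of `ℝ / ℤ` in `ℂ`. -/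
noncomputable def expModOne (x : UnitAddCircle) : ℂ := x.toCircle

lemma expModOne_coe (x : ℝ) : expModOne x = Complex.exp (2 * Real.pi * Complex.I * x) := by
  rw [expModOne, AddCircle.toCircle_apply_mk, Circle.coe_exp]
  congr 1
  push_cast
  ring

lemma isClosedEmbedding_expModOne : IsClosedEmbedding expModOne :=
  (continuous_subtype_val.comp AddCircle.continuous_toCircle).isClosedEmbedding
    (Circle.coe_injective.comp (AddCircle.injective_toCircle one_ne_zero))

lemma range_expModOne : Set.range expModOne = Metric.sphere 0 1 := by
  refine Set.Subset.antisymm (Set.range_subset_iff.2 fun x => ?_) fun z hz => ?_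
  · exact mem_sphere_zero_iff_norm.2 (Circle.norm_coe _)
  · obtain ⟨x, hx⟩ := (AddCircle.homeomorphCircle one_ne_zero).surjective (⟨z, hz⟩ : Circle)
    rw [AddCircle.homeomorphCircle_apply] at hx
    exact ⟨x, congrArg ((↑) : Circle → ℂ) hx⟩

lemma circleMeasure_eq_map_expModOne : circleMeasure = Measure.map expModOne volume := by
  rw [← (UnitAddCircle.measurePreserving_mk 0).map_eq, Measure.map_map
    isClosedEmbedding_expModOne.continuous.measurable AddCircle.measurable_mk', circleMeasure,
    zero_add, restrict_Ico_eq_restrict_Ioc]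
  exact congrArg (Measure.map · _) (funext fun x => (expModOne_coe x).symm)

variable {d : ℕ} (n : Fin d → ℤ)

lemma codingMap_eq_expModOne_comp : codingMap d n = expModOne ∘ seqSumModOne d n :=
  funext fun _ => (expModOne_coe _).symm

lemma range_codingMap_eq_sphere_iff :
    Set.range (codingMap d n) = Metric.sphere 0 1 ↔ Set.range (seqSumModOne d n) = Set.univ := by
  rw [codingMap_eq_expModOne_comp, Set.range_comp, ← range_expModOne,
    ← Set.image_univ (f := expModOne), isClosedEmbedding_expModOne.injective.image_injective.eq_iff]

lemma circleMeasure_range_codingMap :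
    circleMeasure (Set.range (codingMap d n)) = volume (Set.range (seqSumModOne d n)) := by
  rw [circleMeasure_eq_map_expModOne, isClosedEmbedding_expModOne.measurableEmbedding.map_apply,
    codingMap_eq_expModOne_comp, Set.range_comp,
    Set.preimage_image_eq _ isClosedEmbedding_expModOne.injective]

lemma finite_codingMap_fiber_iff :
    (∀ p, {ω | codingMap d n ω = p}.Finite) ↔ ∀ x, (seqSumModOne d n ⁻¹' {x}).Finite := by
  rw [codingMap_eq_expModOne_comp]
  refine ⟨fun h x => (h (expModOne x)).subset fun ω hω => congrArg expModOne hω, fun h p => ?_⟩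
  have hfin : (expModOne ⁻¹' {p}).Finite :=
    (Set.finite_singleton p).preimage isClosedEmbedding_expModOne.injective.injOn
  exact hfin.preimage' fun x _ => h x

end CodingMap

end DigitExpansion

/-- Suitableness of the coding map for `f(z) = z^d`: the following are
equivalent: (i) `π` is onto the unit circle; (ii) distinct finite words give
distinct partial sums; (iii) the number of partial sums of length `k` grows
like `d^k`; (iv) all fibers of `π` are finite; (v) the image of `π` has
positive Haar measure. -/
theorem coding_map_suitable_tfae (d : ℕ) (hd : 2 ≤ d) (n : Fin d → ℤ) :
    List.TFAE
      [ Set.range (codingMap d n) = Metric.sphere (0 : ℂ) 1,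
        ∀ k : ℕ, 1 ≤ k → ∀ w w' : Fin k → Fin d, w ≠ w' →
          (∑ j : Fin k, (n (w j) : ℝ) / (d : ℝ) ^ ((j : ℕ) + 1)) ≠
            (∑ j : Fin k, (n (w' j) : ℝ) / (d : ℝ) ^ ((j : ℕ) + 1)),
        Filter.Tendsto (fun k : ℕ =>
          ((Set.ncard {s : ℝ | ∃ w : Fin k → Fin d,
              s = ∑ j : Fin k, (n (w j) : ℝ) / (d : ℝ) ^ ((j : ℕ) + 1)} : ℝ))
            ^ ((k : ℝ)⁻¹))
          Filter.atTop (nhds (d : ℝ)),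
        ∀ p : ℂ, {ω : ℕ → Fin d | codingMap d n ω = p}.Finite,
        0 < circleMeasure (Set.range (codingMap d n)) ] := by
  have hcard : Nat.card (Fin d) = d := Nat.card_fin d
  have hsums : ∀ k, {s : ℝ | ∃ w : Fin k → Fin d,
      s = ∑ j : Fin k, (n (w j) : ℝ) / (d : ℝ) ^ ((j : ℕ) + 1)} =
      DigitExpansion.wordSums (d : ℝ) (fun i => (n i : ℝ)) k :=
    fun k => Set.ext fun s => exists_congr fun w => eq_comm
  have hinj := DigitExpansion.forall_wordSum_ne_iff (d : ℝ) fun i => (n i : ℝ)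
  simp only [hsums]
  tfae_have 1 ↔ 5 := by
    rw [DigitExpansion.range_codingMap_eq_sphere_iff,
      DigitExpansion.range_seqSumModOne_eq_univ_iff hd,
      DigitExpansion.circleMeasure_range_codingMap, pos_iff_ne_zero]
  tfae_have 2 ↔ 3 := hinj.trans <| by
    rw [← DigitExpansion.tendsto_ncard_wordSums_rpow_inv_iff, hcard]
  tfae_have 2 ↔ 4 := hinj.trans <| by
    rw [DigitExpansion.finite_codingMap_fiber_iff, DigitExpansion.finite_seqSumModOne_fiber_iff hd,
      DigitExpansion.finite_seqSum_fiber_iff hd]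
  tfae_have 2 ↔ 5 := hinj.trans <| by
    rw [DigitExpansion.circleMeasure_range_codingMap, pos_iff_ne_zero,
      DigitExpansion.volume_range_seqSumModOne_ne_zero_iff,
      DigitExpansion.volume_range_seqSum_ne_zero_iff hd hcard]
  tfae_finish
end

section
/- If π is surjective onto the unit circle, then the pushforward under π of the uniform Bernoulli measure m on Σ (the infinite product over ℕ of the uniform probability measure on {1, …, d}) equals the Haar probability measure on the circle. (Instance, for f(z) = z^d, of the paper's corollary that the equilibrium measure μ equals π_*(m) whenever π(Σ) = J.) -/
open MeasureTheory

/-!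
The law `ν` of `∑ₖ n_{ω_k} d^{-k}` is a stationary measure of the iterated function system of the
maps `x ↦ (x + n_i) / d`, and so is Lebesgue measure restricted to its attractor `K`: the map `x ↦
(x + n_i) / d` divides Lebesgue measure by `d`, and `K` is covered by its `d` images. A stationary
measure is determined by its mass, and surjectivity of the coding map gives `K + ℤ = ℝ`, hence `K`
has positive measure; thus `ν` is proportional to Lebesgue measure on `K`. The projection of `ν` to
the circle is therefore absolutely continuous, and it is invariant under multiplication by `d`, so
it is Haar measure by ergodicity of the latter.
-/

open Filter Topology
open scoped ENNReal

section StationaryMeasure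

variable {ι X Y : Type*} [Fintype ι] [MeasurableSpace X] [MeasurableSpace Y]

/-- Hutchinson's invariant measure of the iterated function system `S` with equal weights:
`μ` is the average of its images under the maps `S i`. Multiplying by the number of maps avoids
dividing by it. -/
def IsStationaryMeasure (S : ι → X → X) (μ : Measure X) : Prop :=
  (Fintype.card ι : ℝ≥0∞) • μ = Measure.sum fun i => μ.map (S i)

namespace IsStationaryMeasure

variable {S : ι → X → X} {μ : Measure X}

theorem smul (h : IsStationaryMeasure S μ) (c : ℝ≥0∞) : IsStationaryMeasure S (c • μ) := by
  simp only [IsStationaryMeasure, Measure.map_smul, smul_comm _ c μ]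
  rw [h]
  ext s
  simp [Finset.mul_sum]

theorem card_smul_map {g : X → Y} (h : IsStationaryMeasure S μ) (hS : ∀ i, Measurable (S i))
    (hg : Measurable g) :
    (Fintype.card ι : ℝ≥0∞) • μ.map g = Measure.sum fun i => μ.map (g ∘ S i) := by
  rw [← Measure.map_smul, h, Measure.map_sum hg.aemeasurable]
  simp only [Measure.map_map hg (hS _)]

theorem map {T : ι → Y → Y} {g : X → Y} (h : IsStationaryMeasure S μ)
    (hS : ∀ i, Measurable (S i)) (hT : ∀ i, Measurable (T i)) (hg : Measurable g)
    (hgST : ∀ i, Function.Semiconj g (S i) (T i)) : IsStationaryMeasure T (μ.map g) := by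
  rw [IsStationaryMeasure, h.card_smul_map hS hg]
  simp only [Measure.map_map (hT _) hg, (hgST _).comp_eq]

theorem measurePreserving_of_leftInverse [Nonempty ι] {f : Y → Y} {g : X → Y}
    (h : IsStationaryMeasure S μ) (hS : ∀ i, Measurable (S i)) (hf : Measurable f)
    (hg : Measurable g) (hfgS : ∀ i x, f (g (S i x)) = g x) :
    MeasurePreserving f (μ.map g) (μ.map g) := by
  refine ⟨hf, ?_⟩
  have hcard : (Fintype.card ι : ℝ≥0∞) • (μ.map g).map f = (Fintype.card ι : ℝ≥0∞) • μ.map g := by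
    rw [Measure.map_map hf hg, h.card_smul_map hS (hf.comp hg)]
    have hcomp : ∀ i, (f ∘ g) ∘ S i = g := fun i => funext (hfgS i)
    simp only [hcomp]
    ext s
    simp
  ext s
  have hs := congrArg (· s) hcard
  simpa [ENNReal.mul_right_inj] using hs

end IsStationaryMeasure

/-- Comparing total masses shows that the pieces `S i '' K` overlap in null sets only. -/
theorem isStationaryMeasure_restrict {S : ι → X → X} {μ : Measure X} {K : Set X}
    (hS : ∀ i, MeasurableEmbedding (S i))
    (hμ : ∀ i, μ.map (S i) = (Fintype.card ι : ℝ≥0∞) • μ) (hfin : μ K ≠ ∞)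
    (hK : K ⊆ ⋃ i, S i '' K) : IsStationaryMeasure S (μ.restrict K) := by
  have : IsFiniteMeasure (μ.restrict K) := isFiniteMeasure_restrict.2 hfin
  have : IsFiniteMeasure ((Fintype.card ι : ℝ≥0∞) • μ.restrict K) :=
    Measure.smul_finite _ (ENNReal.natCast_ne_top _)
  have hpiece : ∀ i, (μ.restrict K).map (S i) =
      (Fintype.card ι : ℝ≥0∞) • μ.restrict (S i '' K) := fun i => by
    rw [← Measure.restrict_smul, ← hμ i, (hS i).restrict_map,
      (hS i).injective.preimage_image]
  refine Measure.eq_of_le_of_measure_univ_eq ?_ ?_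
  · calc (Fintype.card ι : ℝ≥0∞) • μ.restrict K
        ≤ (Fintype.card ι : ℝ≥0∞) • Measure.sum fun i => μ.restrict (S i '' K) := by
          gcongr
          exact (Measure.restrict_mono_set μ hK).trans Measure.restrict_iUnion_le
      _ = Measure.sum fun i => (μ.restrict K).map (S i) := by
          simp only [hpiece, Measure.sum_fintype, Finset.smul_sum]
  · simp [Measure.map_apply (hS _).measurable]

end StationaryMeasure

section BernoulliMeasure

variable {ι : Type*}

/-- The sequence with first symbol `a` followed by `x`: the inverse branch of the one-sided
shift attached to the symbol `a`. -/
def prepend (a : ι) (x : ℕ → ι) : ℕ → ι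
  | 0 => a
  | k + 1 => x k

theorem prepend_head_tail (x : ℕ → ι) : prepend (x 0) (fun k => x (k + 1)) = x := by
  funext k
  cases k <;> rfl

theorem prepend_mem_cylinder_succ {a : ι} {x y : ℕ → ι} {k : ℕ} :
    prepend a y ∈ PiNat.cylinder x (k + 1) ↔
      a = x 0 ∧ y ∈ PiNat.cylinder (fun j => x (j + 1)) k := by
  simp only [PiNat.mem_cylinder_iff]
  exact Nat.forall_lt_succ_left

theorem isPiSystem_cylinders (α : ℕ → Type*) :
    IsPiSystem {s : Set (∀ k, α k) | ∃ x k, s = PiNat.cylinder x k} := by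
  rintro _ ⟨x, k, rfl⟩ _ ⟨y, l, rfl⟩ ⟨z, hzx, hzy⟩
  rw [← PiNat.mem_cylinder_iff_eq.1 hzx, ← PiNat.mem_cylinder_iff_eq.1 hzy]
  refine ⟨z, max k l, ?_⟩
  ext w
  simp only [Set.mem_inter_iff, PiNat.mem_cylinder_iff, lt_max_iff]
  grind

variable [MeasurableSpace ι]

theorem measurable_prepend (a : ι) : Measurable (prepend a) := by
  refine measurable_pi_iff.2 fun k => ?_
  cases k with
  | zero => exact measurable_const
  | succ k => exact measurable_pi_apply k

variable [MeasurableSingletonClass ι]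

theorem generateFrom_cylinders [Countable ι] :
    MeasurableSpace.generateFrom {s : Set (ℕ → ι) | ∃ x k, s = PiNat.cylinder x k} =
      MeasurableSpace.pi := by
  let : TopologicalSpace ι := ⊥
  have : DiscreteTopology ι := ⟨rfl⟩
  have : BorelSpace ι := inferInstance
  rw [← (PiNat.isTopologicalBasis_cylinders fun _ => ι).borel_eq_generateFrom,
    ← BorelSpace.measurable_eq]

theorem measurableSet_cylinder [Countable ι] (x : ℕ → ι) (k : ℕ) :
    MeasurableSet (PiNat.cylinder x k) := by
  rw [← generateFrom_cylinders]
  exact MeasurableSpace.measurableSet_generateFrom ⟨x, k, rfl⟩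

theorem measure_ext_of_cylinder [Countable ι] {μ ν : Measure (ℕ → ι)} [IsFiniteMeasure μ]
    (h : ∀ x k, μ (PiNat.cylinder x k) = ν (PiNat.cylinder x k)) : μ = ν := by
  refine ext_of_generate_finite _ generateFrom_cylinders.symm (isPiSystem_cylinders _) ?_ ?_
  · rintro _ ⟨x, k, rfl⟩
    exact h x k
  · rcases isEmpty_or_nonempty (ℕ → ι) with _ | ⟨⟨x⟩⟩
    · simp [Set.univ_eq_empty_iff.2]
    · simpa using h x 0

/-- The uniform Bernoulli measure on sequences over a finite alphabet, characterized by its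
values on cylinders. -/
def IsUniformBernoulli [Fintype ι] (m : Measure (ℕ → ι)) : Prop :=
  ∀ x k, m (PiNat.cylinder x k) = (Fintype.card ι : ℝ≥0∞)⁻¹ ^ k

theorem IsUniformBernoulli.isStationaryMeasure_prepend [Fintype ι] {m : Measure (ℕ → ι)}
    [IsFiniteMeasure m] (hm : IsUniformBernoulli m) : IsStationaryMeasure prepend m := by
  have : IsFiniteMeasure ((Fintype.card ι : ℝ≥0∞) • m) :=
    Measure.smul_finite _ (ENNReal.natCast_ne_top _)
  refine measure_ext_of_cylinder fun x k => ?_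
  rw [Measure.sum_apply _ (measurableSet_cylinder x k), tsum_fintype]
  simp only [Measure.map_apply (measurable_prepend _) (measurableSet_cylinder x k)]
  cases k with
  | zero => simp
  | succ k =>
    have : Nonempty ι := ⟨x 0⟩
    have hpre : ∀ i, prepend i ⁻¹' PiNat.cylinder x (k + 1) =
        {y | i = x 0 ∧ y ∈ PiNat.cylinder (fun j => x (j + 1)) k} := fun i =>
      Set.ext fun y => prepend_mem_cylinder_succ
    calc (Fintype.card ι : ℝ≥0∞) * m (PiNat.cylinder x (k + 1))
        = m (PiNat.cylinder (fun j => x (j + 1)) k) := by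
          rw [hm, hm, pow_succ', ← mul_assoc, ENNReal.mul_inv_cancel (by simp) (by simp), one_mul]
      _ = ∑ i, m (prepend i ⁻¹' PiNat.cylinder x (k + 1)) := by
          rw [Finset.sum_eq_single (x 0) (fun i _ hi => by simp [hpre, hi]) (by simp)]
          simp only [hpre, true_and, Set.ofPred_mem_eq]

end BernoulliMeasure

section RadixSum

variable {ι E : Type*} [NormedAddCommGroup E] [NormedSpace ℝ E]

/-- The similarity `x ↦ r (x + a)` of ratio `r` attached to the digit `a`. -/
def digitMap (r : ℝ) (a x : E) : E := r • (x + a)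

/-- The vector `∑ₖ r ^ k a_{ω_k}`, `k ≥ 1`, with radix `r⁻¹` and digits `a`; the exponent is
`k + 1` because sequences start at `0`. -/
noncomputable def radixSum (r : ℝ) (a : ι → E) (ω : ℕ → ι) : E :=
  ∑' k, r ^ (k + 1) • a (ω k)

variable {r : ℝ}

theorem measurable_digitMap [MeasurableSpace E] [BorelSpace E] (r : ℝ) (a : E) :
    Measurable (digitMap r a) :=
  Continuous.measurable (by unfold digitMap; fun_prop)

theorem measurableEmbedding_digitMap [MeasurableSpace E] [BorelSpace E] (hr : r ≠ 0) (a : E) :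
    MeasurableEmbedding (digitMap r a) :=
  ((Homeomorph.addRight a).trans (Homeomorph.smulOfNeZero r hr)).measurableEmbedding

theorem map_digitMap_addHaar [MeasurableSpace E] [BorelSpace E] [FiniteDimensional ℝ E]
    (μ : Measure E) [μ.IsAddHaarMeasure] (hr : r ≠ 0) (a : E) :
    μ.map (digitMap r a) = ENNReal.ofReal |(r ^ Module.finrank ℝ E)⁻¹| • μ := by
  have hcomp : digitMap r a = (r • ·) ∘ (· + a) := rfl
  rw [hcomp, ← Measure.map_map (by fun_prop) (by fun_prop), map_add_right_eq_self,
    Measure.map_addHaar_smul μ hr]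

section Finite

variable [Finite ι]

theorem exists_summable_norm_radixSum_term_le (hr : |r| < 1) (a : ι → E) :
    ∃ u : ℕ → ℝ, Summable u ∧ ∀ k i, ‖r ^ (k + 1) • a i‖ ≤ u k := by
  obtain ⟨C, hC⟩ := (Set.finite_range fun i => ‖a i‖).bddAbove
  refine ⟨fun k => |r| ^ (k + 1) * C, ?_, fun k i => ?_⟩
  · exact ((summable_nat_add_iff 1).2
      (summable_geometric_of_lt_one (abs_nonneg r) hr)).mul_right C
  · rw [norm_smul, norm_pow, Real.norm_eq_abs]
    exact mul_le_mul_of_nonneg_left (hC ⟨i, rfl⟩) (by positivity)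

variable [CompleteSpace E]

theorem radixSum_prepend (hr : |r| < 1) (a : ι → E) (i : ι) (ω : ℕ → ι) :
    radixSum r a (prepend i ω) = digitMap r (a i) (radixSum r a ω) := by
  obtain ⟨u, hu, hbound⟩ := exists_summable_norm_radixSum_term_le hr a
  have hsum : ∀ x : ℕ → ι, Summable fun k => r ^ (k + 1) • a (x k) := fun x =>
    hu.of_norm_bounded fun k => hbound k (x k)
  rw [radixSum, (hsum _).tsum_eq_zero_add, digitMap, radixSum, smul_add, ← (hsum ω).tsum_const_smul]
  simp only [prepend, zero_add, pow_one, smul_smul, ← pow_succ']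
  exact add_comm _ _

theorem range_radixSum_subset_iUnion_image (hr : |r| < 1) (a : ι → E) :
    Set.range (radixSum r a) ⊆ ⋃ i, digitMap r (a i) '' Set.range (radixSum r a) := by
  rintro _ ⟨ω, rfl⟩
  rw [← prepend_head_tail ω, radixSum_prepend hr]
  exact Set.mem_iUnion_of_mem _ ⟨_, ⟨_, rfl⟩, rfl⟩

theorem continuous_radixSum [TopologicalSpace ι] [DiscreteTopology ι] (hr : |r| < 1)
    (a : ι → E) : Continuous (radixSum r a) := by
  obtain ⟨u, hu, hbound⟩ := exists_summable_norm_radixSum_term_le hr a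
  refine continuous_tsum (fun k => ?_) hu fun k ω => hbound k (ω k)
  exact (continuous_of_discreteTopology.comp (continuous_apply k)).const_smul _

end Finite

theorem IsUniformBernoulli.isStationaryMeasure_map_radixSum [Fintype ι] [TopologicalSpace ι]
    [DiscreteTopology ι] [MeasurableSpace ι] [BorelSpace ι] [CompleteSpace E] [MeasurableSpace E]
    [BorelSpace E] {m : Measure (ℕ → ι)} [IsFiniteMeasure m] (hm : IsUniformBernoulli m)
    (hr : |r| < 1) (a : ι → E) :
    IsStationaryMeasure (fun i => digitMap r (a i)) (m.map (radixSum r a)) :=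
  hm.isStationaryMeasure_prepend.map measurable_prepend (fun _ => measurable_digitMap _ _)
    (continuous_radixSum hr a).measurable (radixSum_prepend hr a)

end RadixSum

section Uniqueness

variable {ι E : Type*} [Fintype ι] [NormedAddCommGroup E] [InnerProductSpace ℝ E]
  [MeasurableSpace E] [BorelSpace E] {r : ℝ} {a : ι → E} {μ ν : Measure E}

theorem charFun_map_digitMap (a t : E) :
    charFun (μ.map (digitMap r a)) t =
      charFun μ (r • t) * Complex.exp (inner ℝ a (r • t) * Complex.I) := by
  have hcomp : digitMap r a = (r • ·) ∘ (· + a) := rfl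
  rw [hcomp, ← Measure.map_map (by fun_prop) (by fun_prop), charFun_map_smul, charFun_map_add_const]

theorem IsStationaryMeasure.card_mul_charFun [IsFiniteMeasure μ]
    (h : IsStationaryMeasure (fun i => digitMap r (a i)) μ) (t : E) :
    Fintype.card ι * charFun μ t =
      (∑ i, Complex.exp (inner ℝ (a i) (r • t) * Complex.I)) * charFun μ (r • t) := by
  have hint : ∀ i, Integrable (fun x => Complex.exp (inner ℝ x t * Complex.I))
      (μ.map (digitMap r (a i))) := fun i =>
    Integrable.of_bound (by fun_prop) 1 (.of_forall fun x => by simp)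
  calc Fintype.card ι * charFun μ t
      = charFun ((Fintype.card ι : ℝ≥0∞) • μ) t := by simp [charFun_apply]
    _ = ∑ i, charFun (μ.map (digitMap r (a i))) t := by
        rw [h, Measure.sum_fintype, charFun_apply, integral_finsetSum_measure fun i _ => hint i]
        simp only [charFun_apply]
    _ = (∑ i, Complex.exp (inner ℝ (a i) (r • t) * Complex.I)) * charFun μ (r • t) := by
        rw [Finset.sum_mul]
        exact Finset.sum_congr rfl fun i _ => by rw [charFun_map_digitMap, mul_comm]

/-- The difference of the two characteristic functions vanishes at `0` and does not decrease in
norm when its argument is contracted by `r`. -/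
theorem IsStationaryMeasure.unique [CompleteSpace E] [SecondCountableTopology E] [Nonempty ι]
    [IsFiniteMeasure μ] [IsFiniteMeasure ν] (hr : |r| < 1)
    (hμ : IsStationaryMeasure (fun i => digitMap r (a i)) μ)
    (hν : IsStationaryMeasure (fun i => digitMap r (a i)) ν)
    (huniv : μ Set.univ = ν Set.univ) : μ = ν := by
  refine Measure.ext_of_charFun (funext fun t => ?_)
  set φ : E → ℂ := fun s => charFun μ s - charFun ν s with hφ
  have hcontract : ∀ s, ‖φ s‖ ≤ ‖φ (r • s)‖ := fun s => by
    have hnorm : ‖∑ i, Complex.exp (inner ℝ (a i) (r • s) * Complex.I)‖ ≤ Fintype.card ι := by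
      refine (norm_sum_le _ _).trans_eq ?_
      simp [Complex.norm_exp_ofReal_mul_I]
    have hmul : Fintype.card ι * φ s =
        (∑ i, Complex.exp (inner ℝ (a i) (r • s) * Complex.I)) * φ (r • s) := by
      rw [hφ, mul_sub, mul_sub, hμ.card_mul_charFun, hν.card_mul_charFun]
    refine le_of_mul_le_mul_left ?_ (Nat.cast_pos (α := ℝ).2 (Fintype.card_pos (α := ι)))
    calc (Fintype.card ι : ℝ) * ‖φ s‖
        = ‖∑ i, Complex.exp (inner ℝ (a i) (r • s) * Complex.I)‖ * ‖φ (r • s)‖ := by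
          rw [← norm_mul, ← hmul, norm_mul, Complex.norm_natCast]
      _ ≤ Fintype.card ι * ‖φ (r • s)‖ := by gcongr
  have hiterate : ∀ k : ℕ, ‖φ t‖ ≤ ‖φ (r ^ k • t)‖ := fun k => by
    induction k with
    | zero => simp
    | succ k ih => exact ih.trans (by simpa [pow_succ', mul_smul] using hcontract (r ^ k • t))
  have hlim : Tendsto (fun k : ℕ => ‖φ (r ^ k • t)‖) atTop (𝓝 0) := by
    have hcont : Continuous φ := by fun_prop
    have hscale := (tendsto_pow_atTop_nhds_zero_of_abs_lt_one hr).smul_const t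
    have hzero : φ 0 = 0 := by simp [hφ, Measure.real, huniv]
    simpa [hzero] using ((hcont.tendsto _).comp hscale).norm
  exact sub_eq_zero.1 (norm_le_zero_iff.1 (ge_of_tendsto' hlim hiterate))

theorem IsStationaryMeasure.absolutelyContinuous [FiniteDimensional ℝ E] [IsFiniteMeasure ν]
    (hν : IsStationaryMeasure (fun i => digitMap r (a i)) ν) (μ : Measure E) [μ.IsAddHaarMeasure]
    (hr₀ : r ≠ 0) (hr : |r| < 1) (hcard : Fintype.card ι * |r| ^ Module.finrank ℝ E = 1)
    {K : Set E} (hK₀ : μ K ≠ 0) (hfin : μ K ≠ ∞) (hK : K ⊆ ⋃ i, digitMap r (a i) '' K) :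
    ν ≪ μ := by
  have := FiniteDimensional.proper ℝ E
  have : Nonempty ι := by
    refine Fintype.card_pos_iff.1 (Nat.pos_of_ne_zero fun h => ?_)
    simp [h] at hcard
  have : IsFiniteMeasure (μ.restrict K) := isFiniteMeasure_restrict.2 hfin
  have : IsFiniteMeasure (μ K • ν) := Measure.smul_finite _ hfin
  have : IsFiniteMeasure (ν Set.univ • μ.restrict K) := Measure.smul_finite _ (measure_ne_top _ _)
  have hmap : ∀ i, μ.map (digitMap r (a i)) = (Fintype.card ι : ℝ≥0∞) • μ := fun i => by
    rw [map_digitMap_addHaar μ hr₀, abs_inv, abs_pow, ← eq_inv_of_mul_eq_one_left hcard,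
      ENNReal.ofReal_natCast]
  have hrestrict := isStationaryMeasure_restrict (fun i => measurableEmbedding_digitMap hr₀ (a i))
    hmap hfin hK
  have heq : μ K • ν = ν Set.univ • μ.restrict K :=
    (hν.smul _).unique hr (hrestrict.smul _) (by simp [mul_comm])
  refine (Measure.absolutelyContinuous_smul hK₀).trans ?_
  rw [heq]
  exact Measure.smul_absolutelyContinuous.trans Measure.restrict_le_self.absolutelyContinuous

end Uniqueness

section Circle

theorem measure_ne_zero_of_forall_exists_vadd_mem {G X : Type*} [AddGroup G] [Countable G]
    [AddAction G X] [MeasurableSpace X] {μ : Measure X} [VAddInvariantMeasure G X μ]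
    [NeZero μ] {K : Set X} (hK : ∀ x, ∃ g : G, g +ᵥ x ∈ K) : μ K ≠ 0 := by
  intro h
  have huniv : Set.univ = ⋃ g : G, (g +ᵥ ·) ⁻¹' K :=
    (Set.eq_univ_of_forall fun x => Set.mem_iUnion.2 (hK x)).symm
  refine Measure.measure_univ_ne_zero.2 (NeZero.ne μ) ?_
  rw [huniv]
  exact measure_iUnion_null fun g => by rw [measure_preimage_vadd, h]

theorem volume_ne_zero_of_image_coe_eq_univ {K : Set ℝ}
    (hK : ((↑) : ℝ → UnitAddCircle) '' K = Set.univ) : volume K ≠ 0 := by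
  refine measure_ne_zero_of_forall_exists_vadd_mem (G := AddSubgroup.zmultiples (1 : ℝ))
    fun x => ?_
  obtain ⟨y, hy, hyx⟩ : (x : UnitAddCircle) ∈ ((↑) : ℝ → UnitAddCircle) '' K := hK ▸ Set.mem_univ _
  refine ⟨⟨-x + y, QuotientAddGroup.eq.1 hyx.symm⟩, ?_⟩
  simpa [AddSubgroup.vadd_def] using hy

theorem map_addCircle_mk_volume_absolutelyContinuous (T : ℝ) [hT : Fact (0 < T)] :
    (volume : Measure ℝ).map ((↑) : ℝ → AddCircle T) ≪ volume := by
  rw [← (AddCircle.measurePreserving_mk T 0).map_eq]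
  exact (isAddFundamentalDomain_Ioc' hT.out 0).absolutelyContinuous_map

theorem nsmul_coe_digitMap_inv {d : ℕ} (hd : d ≠ 0) (z : ℤ) (x : ℝ) :
    d • ((digitMap (d : ℝ)⁻¹ (z : ℝ) x : ℝ) : UnitAddCircle) = (x : UnitAddCircle) := by
  have h : d • digitMap (d : ℝ)⁻¹ (z : ℝ) x = x + z := by
    simp [digitMap, hd]
  rw [← AddCircle.coe_nsmul, h, AddCircle.coe_add]
  simp

theorem map_coe_eq_volume_of_isStationaryMeasure {ι : Type*} [Fintype ι] [Nonempty ι] {d : ℕ}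
    (hd : 2 ≤ d) {n : ι → ℤ} {ν : Measure ℝ} [IsProbabilityMeasure ν]
    (hν : IsStationaryMeasure (fun i => digitMap (d : ℝ)⁻¹ (n i : ℝ)) ν) (hac : ν ≪ volume) :
    ν.map ((↑) : ℝ → UnitAddCircle) = volume := by
  have : IsProbabilityMeasure (volume : Measure UnitAddCircle) :=
    ⟨by simp [AddCircle.measure_univ]⟩
  have : IsProbabilityMeasure (ν.map ((↑) : ℝ → UnitAddCircle)) :=
    Measure.isProbabilityMeasure_map AddCircle.measurable_mk'.aemeasurable
  have hpres : MeasurePreserving (fun x : UnitAddCircle => d • x) (ν.map (↑)) (ν.map (↑)) :=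
    hν.measurePreserving_of_leftInverse (fun i => measurable_digitMap _ _) (by fun_prop)
      AddCircle.measurable_mk' fun i => nsmul_coe_digitMap_inv (by lia) (n i)
  exact (AddCircle.ergodic_nsmul hd).eq_of_absolutelyContinuous hpres
    ((hac.map AddCircle.measurable_mk').trans (map_addCircle_mk_volume_absolutelyContinuous 1))

theorem measurePreserving_toCircle :
    MeasurePreserving (fun x : UnitAddCircle => (x.toCircle : ℂ)) volume circleMeasure := by
  have hmeas : Measurable fun x : UnitAddCircle => (x.toCircle : ℂ) :=
    (continuous_subtype_val.comp AddCircle.continuous_toCircle).measurable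
  refine ⟨hmeas, ?_⟩
  rw [← (AddCircle.measurePreserving_mk 1 0).map_eq, Measure.map_map hmeas AddCircle.measurable_mk',
    circleMeasure, zero_add, Measure.restrict_congr_set Ico_ae_eq_Ioc]
  congr 1 with x
  simp [AddCircle.toCircle_apply_mk, Circle.coe_exp, mul_right_comm _ Complex.I]

variable {d : ℕ} {n : Fin d → ℤ}

theorem codingMap_eq_toCircle_radixSum (ω : ℕ → Fin d) :
    codingMap d n ω =
      AddCircle.toCircle ((radixSum (d : ℝ)⁻¹ (fun i => (n i : ℝ)) ω : ℝ) : UnitAddCircle) := by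
  have hsum : ∑' k : ℕ, (n (ω k) : ℝ) / (d : ℝ) ^ (k + 1) =
      radixSum (d : ℝ)⁻¹ (fun i => (n i : ℝ)) ω :=
    tsum_congr fun k => by rw [inv_pow, smul_eq_mul, inv_mul_eq_div]
  rw [codingMap, hsum, AddCircle.toCircle_apply_mk, Circle.coe_exp, div_one, Complex.ofReal_mul,
    mul_right_comm]
  norm_num

theorem surjective_coe_radixSum
    (hsurj : Set.range (codingMap d n) = Metric.sphere (0 : ℂ) 1) :
    Function.Surjective fun ω =>
      ((radixSum (d : ℝ)⁻¹ (fun i => (n i : ℝ)) ω : ℝ) : UnitAddCircle) := by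
  intro (x : UnitAddCircle)
  obtain ⟨ω, hω⟩ : (x.toCircle : ℂ) ∈ Set.range (codingMap d n) := hsurj ▸ x.toCircle.2
  rw [codingMap_eq_toCircle_radixSum] at hω
  exact ⟨ω, AddCircle.injective_toCircle one_ne_zero (Subtype.ext hω)⟩

theorem measurePreserving_coe_radixSum (hd : 2 ≤ d) {m : Measure (ℕ → Fin d)}
    [IsProbabilityMeasure m] (hm : IsUniformBernoulli m)
    (hsurj : Function.Surjective fun ω =>
      ((radixSum (d : ℝ)⁻¹ (fun i => (n i : ℝ)) ω : ℝ) : UnitAddCircle)) :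
    MeasurePreserving (fun ω => ((radixSum (d : ℝ)⁻¹ (fun i => (n i : ℝ)) ω : ℝ) : UnitAddCircle))
      m volume := by
  have hd' : (1 : ℝ) < d := by exact_mod_cast hd
  have hr : |(d : ℝ)⁻¹| < 1 := by simpa using inv_lt_one_of_one_lt₀ hd'
  have : Nonempty (Fin d) := ⟨0, by lia⟩
  have hcont := continuous_radixSum hr fun i => (n i : ℝ)
  have : IsProbabilityMeasure (m.map (radixSum (d : ℝ)⁻¹ fun i => (n i : ℝ))) :=
    Measure.isProbabilityMeasure_map hcont.aemeasurable
  have hν := hm.isStationaryMeasure_map_radixSum hr fun i => (n i : ℝ)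
  have hK : volume (Set.range (radixSum (d : ℝ)⁻¹ fun i => (n i : ℝ))) ≠ 0 :=
    volume_ne_zero_of_image_coe_eq_univ ((Set.range_comp _ _).symm.trans hsurj.range_eq)
  have hac := hν.absolutelyContinuous volume (by positivity) hr
    (by simp [(one_pos.trans hd').ne']) hK (isCompact_range hcont).measure_ne_top
    (range_radixSum_subset_iUnion_image hr _)
  refine ⟨AddCircle.measurable_mk'.comp hcont.measurable, ?_⟩
  rw [← map_coe_eq_volume_of_isStationaryMeasure hd hν hac]
  exact (Measure.map_map AddCircle.measurable_mk' hcont.measurable).symm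

theorem isUniformBernoulli_of_forall_fin {m : Measure (ℕ → Fin d)}
    (hm : ∀ (k : ℕ) (w : Fin k → Fin d),
      m {ω : ℕ → Fin d | ∀ j : Fin k, ω (j : ℕ) = w j} = (1 / (d : ℝ≥0∞)) ^ k) :
    IsUniformBernoulli m := fun x k => by
  simpa [PiNat.cylinder, Fin.forall_iff] using hm k fun j => x j

end Circle

/-- For `f(z) = z^d`: if the coding map `π` is surjective onto the unit circle,
then the pushforward under `π` of the uniform Bernoulli measure `m` on
`{1,…,d}^ℕ` (characterized by giving each cylinder of length `k` the mass
`(1/d)^k`) equals the Haar probability measure on the circle. -/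
theorem map_bernoulli_eq_haar_of_surjective (d : ℕ) (hd : 2 ≤ d)
    (n : Fin d → ℤ) (m : Measure (ℕ → Fin d)) [IsProbabilityMeasure m]
    (hm : ∀ (k : ℕ) (w : Fin k → Fin d),
      m {ω : ℕ → Fin d | ∀ j : Fin k, ω (j : ℕ) = w j} = (1 / (d : ENNReal)) ^ k)
    (hsurj : Set.range (codingMap d n) = Metric.sphere (0 : ℂ) 1) :
    Measure.map (codingMap d n) m = circleMeasure := by
  rw [funext codingMap_eq_toCircle_radixSum]
  exact (measurePreserving_toCircle.comp <| measurePreserving_coe_radixSum hd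
    (isUniformBernoulli_of_forall_fin hm) (surjective_coe_radixSum hsurj)).map_eq
end

section
/- Let g_1(z) = ((1+i)/2)·z and g_2(z) = ((1−i)/2)·z + 1 + i on ℂ, and let K be the unique nonempty compact subset of ℂ with K = g_1(K) ∪ g_2(K) (the Lévy dragon). Then K has nonempty interior in ℂ. -/
open MeasureTheory

/-!
The maps `z ↦ uz + 2l`, with `u` a unit and `l` an element of `ℤ[i]`, form a countable group `Γ`.
The quotient `ℤ[i] / (1 - i)` has two elements, represented by `0` and by any unit; this makes
multiplication by `c = (1 + i) / 2` carry each `γ(w)` with `γ ∈ Γ` to `γ'(g₁ w)` or `γ'(g₂ w)` for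
some `γ' ∈ Γ`. So the union `U` of the `Γ`-translates of `K` satisfies `c U ⊆ U`. As `U` is coarsely
dense in `ℂ` and `‖c‖ < 1`, it is dense; it is also closed, so it is all of `ℂ`, and Baire's theorem
gives a translate of `K`, hence `K` itself, an interior point.
-/

open Complex

open Zsqrtd (sqrtd)

open scoped Pointwise

local notation "ℤ[i]" => GaussianInt

theorem nonempty_interior_of_iUnion_image_eq_univ {ι X Y : Type*} [Countable ι]
    [TopologicalSpace X] [TopologicalSpace Y] [BaireSpace Y] [Nonempty Y] (e : ι → X ≃ₜ Y)
    {K : Set X} (hK : IsClosed K) (hcover : ⋃ i, e i '' K = Set.univ) : (interior K).Nonempty := by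
  obtain ⟨i, hi⟩ :=
    nonempty_interior_of_iUnion_of_closed (fun i => (e i).isClosed_image.2 hK) hcover
  rw [← (e i).image_interior] at hi
  exact hi.of_image

theorem dense_of_mapsTo_smul_of_dist_le {𝕜 E : Type*} [NormedDivisionRing 𝕜]
    [SeminormedAddCommGroup E] [Module 𝕜 E] [NormSMulClass 𝕜 E] {U : Set E} {c : 𝕜} {r : ℝ}
    (hc₀ : c ≠ 0) (hc₁ : ‖c‖ < 1) (hcU : Set.MapsTo (c • ·) U U)
    (hU : ∀ x, ∃ y ∈ U, dist x y ≤ r) : Dense U := by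
  refine Metric.dense_iff.2 fun x ε hε => ?_
  have hlim : Filter.Tendsto (fun n : ℕ => ‖c‖ ^ n * r) Filter.atTop (nhds 0) := by
    simpa using (tendsto_pow_atTop_nhds_zero_of_lt_one (norm_nonneg c) hc₁).mul_const r
  obtain ⟨n, hn⟩ := (hlim.eventually_lt_const hε).exists
  obtain ⟨y, hyU, hxy⟩ := hU ((c ^ n)⁻¹ • x)
  have hmem : c ^ n • y ∈ U := by simpa only [smul_iterate] using hcU.iterate n hyU
  refine ⟨c ^ n • y, ?_, hmem⟩
  rw [Metric.mem_ball']
  calc dist x (c ^ n • y)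
      = dist (c ^ n • (c ^ n)⁻¹ • x) (c ^ n • y) := by rw [smul_inv_smul₀ (pow_ne_zero n hc₀)]
    _ = ‖c‖ ^ n * dist ((c ^ n)⁻¹ • x) y := by rw [dist_smul₀, norm_pow]
    _ ≤ ‖c‖ ^ n * r := by gcongr
    _ < ε := hn

theorem toComplex_sqrtd : ((sqrtd : ℤ[i]) : ℂ) = I := by
  simp [GaussianInt.toComplex_def]

theorem isUnit_sqrtd : IsUnit (sqrtd : ℤ[i]) :=
  (Zsqrtd.norm_eq_one_iff' (by norm_num) _).1 rfl

theorem even_norm_iff_even_re_add_im (x : ℤ[i]) : Even x.norm ↔ Even (x.re + x.im) := by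
  simp [Zsqrtd.norm_def, Int.even_add, Int.even_mul]

theorem one_sub_sqrtd_dvd_iff_even_norm (x : ℤ[i]) : 1 - sqrtd ∣ x ↔ Even x.norm := by
  constructor
  · rintro ⟨y, rfl⟩
    rw [Zsqrtd.norm_mul]
    exact Even.mul_right (by decide) _
  · intro hx
    obtain ⟨m, hm⟩ := (even_norm_iff_even_re_add_im x).1 hx
    -- the quotient `x / (1 - i) = (1 + i) x / 2`
    exact ⟨⟨m - x.im, m⟩, Zsqrtd.ext (by simp; lia) (by simp)⟩

theorem one_sub_sqrtd_dvd_or_dvd_sub_unit (x : ℤ[i]) (u : ℤ[i]ˣ) :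
    1 - sqrtd ∣ x ∨ 1 - sqrtd ∣ x - (u : ℤ[i]) := by
  have hu : ¬ Even (u : ℤ[i]).norm := by
    rw [(Zsqrtd.norm_eq_one_iff' (by norm_num) _).2 u.isUnit]
    decide
  simp only [one_sub_sqrtd_dvd_iff_even_norm, even_norm_iff_even_re_add_im, Zsqrtd.re_sub,
    Zsqrtd.im_sub] at hu ⊢
  grind

theorem isClosed_range_toComplex : IsClosed (Set.range GaussianInt.toComplex) := by
  have hℤ : IsClosed (Set.range ((↑) : ℤ → ℝ)) := Int.isClosedEmbedding_coe_real.isClosed_range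
  convert! (hℤ.preimage continuous_re).inter (hℤ.preimage continuous_im) using 1
  ext z
  constructor
  · rintro ⟨x, rfl⟩
    exact ⟨⟨x.re, by simp⟩, ⟨x.im, by simp⟩⟩
  · rintro ⟨⟨a, ha⟩, ⟨b, hb⟩⟩
    exact ⟨⟨a, b⟩, Complex.ext (by simpa using ha) (by simpa using hb)⟩

theorem isUnit_iff_norm_toComplex_eq_one {x : ℤ[i]} : IsUnit x ↔ ‖(x : ℂ)‖ = 1 := by
  rw [← Zsqrtd.norm_eq_one_iff' (by norm_num), ← Int.cast_inj (α := ℝ),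
    GaussianInt.intCast_real_norm, normSq_eq_norm_sq, Int.cast_one,
    pow_eq_one_iff_of_nonneg (norm_nonneg _) two_ne_zero]

theorem isCompact_range_units_toComplex :
    IsCompact (Set.range fun u : ℤ[i]ˣ => ((u : ℤ[i]) : ℂ)) := by
  convert! (isCompact_sphere (0 : ℂ) 1).inter_left isClosed_range_toComplex using 1
  ext z
  constructor
  · rintro ⟨u, rfl⟩
    exact ⟨⟨u, rfl⟩, mem_sphere_zero_iff_norm.2 (isUnit_iff_norm_toComplex_eq_one.1 u.isUnit)⟩
  · rintro ⟨⟨x, rfl⟩, hx⟩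
    exact ⟨(isUnit_iff_norm_toComplex_eq_one.2 (mem_sphere_zero_iff_norm.1 hx)).unit, rfl⟩

theorem exists_dist_toComplex_le_one (z : ℂ) : ∃ x : ℤ[i], dist z x ≤ 1 := by
  refine ⟨⟨round z.re, round z.im⟩, ?_⟩
  calc dist z (GaussianInt.toComplex ⟨round z.re, round z.im⟩)
      ≤ |z.re - round z.re| + |z.im - round z.im| := by
        simpa [dist_eq_norm] using
          norm_le_abs_re_add_abs_im (z - GaussianInt.toComplex ⟨round z.re, round z.im⟩)
    _ ≤ 1 / 2 + 1 / 2 := add_le_add (abs_sub_round _) (abs_sub_round _)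
    _ = 1 := by norm_num

instance {d : ℤ} : Countable (ℤ√d) :=
  Function.Injective.countable (f := fun x : ℤ√d => (x.re, x.im)) fun x y h => by
    simpa [Zsqrtd.ext_iff] using h

instance {M : Type*} [Monoid M] [Countable M] : Countable Mˣ :=
  Units.val_injective.countable

section OrbitUnion

/-- The motion `z ↦ uz + 2l` of `ℂ`. These motions form the deck group of the order-four
covering `φ`. -/
noncomputable def gaussianMotion (u : ℤ[i]ˣ) (l : ℤ[i]) : ℂ ≃ₜ ℂ :=
  (Homeomorph.mulLeft₀ ((u : ℤ[i]) : ℂ) (by simp)).trans (Homeomorph.addRight (2 * (l : ℂ)))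

/-- The union of the images of `K` under all motions `z ↦ uz + 2l`, that is, the full preimage
under the covering `φ` of the set `φ(K)`. -/
def orbitUnion (K : Set ℂ) : Set ℂ :=
  ⋃ p : ℤ[i]ˣ × ℤ[i], gaussianMotion p.1 p.2 '' K

variable {K : Set ℂ}

theorem mem_orbitUnion {z : ℂ} :
    z ∈ orbitUnion K ↔
      ∃ (u : ℤ[i]ˣ) (l : ℤ[i]), ∃ w ∈ K, ((u : ℤ[i]) : ℂ) * w + 2 * (l : ℂ) = z := by
  simp [orbitUnion, gaussianMotion]

theorem isClosed_orbitUnion (hK : IsCompact K) : IsClosed (orbitUnion K) := by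
  have hlattice : IsClosed ((2 : ℂ) • Set.range GaussianInt.toComplex) :=
    isClosed_range_toComplex.smul_of_ne_zero two_ne_zero
  convert! hlattice.add_left_of_isCompact (isCompact_range_units_toComplex.mul hK) using 1
  ext z
  simp only [mem_orbitUnion, Set.mem_add, Set.mem_mul, Set.mem_range, exists_exists_eq_and,
    Set.mem_smul_set, smul_eq_mul, ↓existsAndEq, and_true]
  grind

theorem exists_mem_orbitUnion_dist_le_two (hK : K.Nonempty) (z : ℂ) :
    ∃ y ∈ orbitUnion K, dist z y ≤ 2 := by
  obtain ⟨w, hw⟩ := hK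
  obtain ⟨l, hl⟩ := exists_dist_toComplex_le_one ((z - w) / 2)
  refine ⟨w + 2 * l, mem_orbitUnion.2 ⟨1, l, w, hw, by simp⟩, ?_⟩
  calc dist z (w + 2 * l) = ‖2 * ((z - w) / 2 - l)‖ := by
        rw [dist_eq_norm]
        ring_nf
    _ = 2 * dist ((z - w) / 2) l := by rw [Complex.norm_mul, Complex.norm_two, dist_eq_norm]
    _ ≤ 2 := by linarith

theorem mapsTo_smul_orbitUnion (h₁ : Set.MapsTo (fun z => (1 + I) / 2 * z) K K)
    (h₂ : Set.MapsTo (fun z => (1 - I) / 2 * z + 1 + I) K K) :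
    Set.MapsTo (((1 + I) / 2 : ℂ) • ·) (orbitUnion K) (orbitUnion K) := by
  intro z hz
  obtain ⟨u, l, w, hw, rfl⟩ := mem_orbitUnion.1 hz
  simp only [smul_eq_mul, mem_orbitUnion]
  -- `c (u w + 2 l)` equals `u g₁(w) + (1 + i) l`, and also `v g₂(w) + (1 + i) (l - v)`, `v = i u`
  let v : ℤ[i]ˣ := u * isUnit_sqrtd.unit
  have hv : ((v : ℤ[i]) : ℂ) = (u : ℤ[i]) * I := by simp [v, toComplex_sqrtd]
  rcases one_sub_sqrtd_dvd_or_dvd_sub_unit l v with ⟨m, hm⟩ | ⟨m, hm⟩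
  · have hl : (l : ℂ) = (1 - I) * m := by simp [hm, toComplex_sqrtd]
    refine ⟨u, m, _, h₁ hw, ?_⟩
    linear_combination -(1 + I) * hl + (m : ℂ) * I_sq
  · have hl : (l : ℂ) - (v : ℤ[i]) = (1 - I) * m := by
      simpa [toComplex_sqrtd] using congrArg GaussianInt.toComplex hm
    refine ⟨v, m, _, h₂ hw, ?_⟩
    linear_combination -(1 + I) * hl + (1 - I) / 2 * w * hv +
      (m - ((u : ℤ[i]) : ℂ) * w / 2) * I_sq

theorem norm_one_add_I_div_two_lt_one : ‖(1 + I) / 2‖ < 1 := by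
  rw [← sq_lt_one_iff₀ (norm_nonneg _), ← normSq_eq_norm_sq]
  norm_num [normSq_apply]

theorem orbitUnion_eq_univ (hne : K.Nonempty) (hK : IsCompact K)
    (h₁ : Set.MapsTo (fun z => (1 + I) / 2 * z) K K)
    (h₂ : Set.MapsTo (fun z => (1 - I) / 2 * z + 1 + I) K K) : orbitUnion K = Set.univ := by
  have hc₀ : (1 + I) / 2 ≠ 0 := by simp [Complex.ext_iff]
  have hdense : Dense (orbitUnion K) :=
    dense_of_mapsTo_smul_of_dist_le hc₀ norm_one_add_I_div_two_lt_one
      (mapsTo_smul_orbitUnion h₁ h₂) (exists_mem_orbitUnion_dist_le_two hne)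
  rw [← (isClosed_orbitUnion hK).closure_eq, hdense.closure_eq]

end OrbitUnion

theorem levy_dragon_nonempty_interior_general {K : Set ℂ} (hne : K.Nonempty) (hc : IsCompact K)
    (h₁ : Set.MapsTo (fun z => (1 + I) / 2 * z) K K)
    (h₂ : Set.MapsTo (fun z => (1 - I) / 2 * z + 1 + I) K K) : (interior K).Nonempty :=
  nonempty_interior_of_iUnion_image_eq_univ _ hc.isClosed (orbitUnion_eq_univ hne hc h₁ h₂)

/-- The Lévy dragon, the attractor of `g₁(z) = ((1+i)/2)z`,
`g₂(z) = ((1-i)/2)z + 1 + i`, has nonempty interior in `ℂ`. -/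
theorem levy_dragon_nonempty_interior (K : Set ℂ)
    (hne : K.Nonempty) (hc : IsCompact K)
    (hK : K = (fun z : ℂ => ((1 + Complex.I) / 2) * z) '' K ∪
              (fun z : ℂ => ((1 - Complex.I) / 2) * z + 1 + Complex.I) '' K) :
    (interior K).Nonempty :=
  levy_dragon_nonempty_interior_general hne hc (fun _ hw => hK.ge (.inl ⟨_, hw, rfl⟩))
    (fun _ hw => hK.ge (.inr ⟨_, hw, rfl⟩))
end

section
/- For any choice of μ_1, μ_2 ∈ {(1+i)/2, (1−i)/2, (−1+i)/2, (−1−i)/2} and β_1, β_2 ∈ (1+i)ℤ[i], with g_j(z) = μ_j·z + β_j on ℂ, the unique nonempty compact subset K of ℂ with K = g_1(K) ∪ g_2(K) has two-dimensional Lebesgue measure equal to a nonnegative integer. (Instance, for the Lattès map, of the Multiplicity Theorem, which gives μ_N(K) = n ∈ ℤ_{≥0}.) -/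
open MeasureTheory

/-!
Let `m` be Lebesgue measure restricted to `K`. The linear parts of the branches are `α⁻¹ u` with
`α = 1 + i` and `u` a fourth root of unity, and each branch scales area by `1 / 2`, so the areas of
the two pieces `g_j(K)` add up to that of `K`; hence they overlap in a null set and `m` is the
average of its push-forwards under the branches. Project `m` to the torus `ℂ / 2ℤ[i]` and sum over
the rotations by fourth roots of unity. Since `α g_j(z) = u z` modulo `2ℤ[i]`, the resulting measure
is invariant under multiplication by `α`, which is an ergodic endomorphism of the torus, so it is a
constant multiple of Haar measure. The constant is a natural number because the density counts the
points of the rotated copies of `K` over a point of the torus. Comparing total masses, four times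
the area of `K` is this number times the covolume `4` of `2ℤ[i]`.

The same argument covers `N` branches `A⁻¹ (u z + v)`, for any lattice `L` with an expanding linear
endomorphism `A` of determinant `± N`, `v` in `L`, and `u` in a finite group of volume-preserving
linear maps that preserve `L` and commute with `A`.
-/

open Set Function Module
open scoped Pointwise ENNReal NNReal

section

variable {α β ι : Type*} [MeasurableSpace α] [MeasurableSpace β]

theorem exists_eq_natCast_of_smul_eq_sum_restrict [Countable ι] {m : Measure α} [SigmaFinite m]
    [NeZero m] {S : ι → Set α} (hS : ∀ i, MeasurableSet (S i)) {c : ℝ≥0∞} (hc : c ≠ ∞)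
    (h : c • m = Measure.sum fun i => m.restrict (S i)) : ∃ n : ℕ, c = n := by
  have hmeas : Measurable fun x => ∑' i, (S i).indicator (1 : α → ℝ≥0∞) x :=
    Measurable.tsum fun i => measurable_one.indicator (hS i)
  have hdens : m.withDensity (fun _ => c) =
      m.withDensity fun x => ∑' i, (S i).indicator (1 : α → ℝ≥0∞) x := by
    simp_rw [withDensity_const, h, ← withDensity_indicator_one (hS _)]
    rw [← withDensity_tsum fun i => measurable_one.indicator (hS i)]
    congr with x
    exact tsum_apply (Pi.summable.2 fun _ => ENNReal.summable)
  obtain ⟨x, hx⟩ := ((withDensity_eq_iff_of_sigmaFinite measurable_const.aemeasurable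
    hmeas.aemeasurable).1 hdens).exists
  have hcount : c = ENat.card {i | x ∈ S i} := by
    rw [← ENNReal.tsum_one, tsum_subtype {i | x ∈ S i} fun _ => (1 : ℝ≥0∞)]
    exact hx
  have hfin : ENat.card {i | x ∈ S i} ≠ ⊤ := by
    rintro htop
    simp [htop, hc] at hcount
  obtain ⟨n, hn⟩ := ENat.ne_top_iff_exists.1 hfin
  exact ⟨n, by simp [hcount, ← hn]⟩

theorem restrict_eq_inv_card_smul_sum_map_restrict [Fintype ι] [Nonempty ι] {μ : Measure α}
    {φ : ι → α → α} (hφ : ∀ j, MeasurableEmbedding (φ j))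
    (hμ : ∀ j, μ.map (φ j) = (Fintype.card ι : ℝ≥0∞) • μ) {K : Set α} (hfin : μ K ≠ ∞)
    (hK : K = ⋃ j, φ j '' K) :
    μ.restrict K = (Fintype.card ι : ℝ≥0∞)⁻¹ • ∑ j, (μ.restrict K).map (φ j) := by
  have hcard : (Fintype.card ι : ℝ≥0∞)⁻¹ * Fintype.card ι = 1 :=
    ENNReal.inv_mul_cancel (by simp) (by simp)
  have hpiece (j : ι) :
      (Fintype.card ι : ℝ≥0∞)⁻¹ • (μ.restrict K).map (φ j) = μ.restrict (φ j '' K) := by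
    have h := (hφ j).restrict_map μ (φ j '' K)
    rw [preimage_image_eq _ (hφ j).injective, hμ, Measure.restrict_smul] at h
    rw [← h, smul_smul, hcard, one_smul]
  have : IsFiniteMeasure (μ.restrict K) := ⟨by simpa using hfin.lt_top⟩
  refine Measure.eq_of_le_of_measure_univ_eq ?_ ?_
  · calc μ.restrict K = μ.restrict (⋃ j, φ j '' K) := by rw [← hK]
      _ ≤ Measure.sum fun j => μ.restrict (φ j '' K) := Measure.restrict_iUnion_le
      _ = (Fintype.card ι : ℝ≥0∞)⁻¹ • ∑ j, (μ.restrict K).map (φ j) := by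
        simp_rw [Measure.sum_fintype, ← hpiece, Finset.smul_sum]
  · simp [Measure.map_apply (hφ _).measurable, ← mul_assoc, hcard]

theorem measurePreserving_sum_map {G : Type*} [Fintype ι] [Nonempty ι] [Fintype G]
    {m : Measure α} {φ : ι → α → α} (hφ : ∀ j, Measurable (φ j))
    (hm : m = (Fintype.card ι : ℝ≥0∞)⁻¹ • ∑ j, m.map (φ j))
    {T : β → β} (hT : Measurable T) {p : G → α → β} (hp : ∀ g, Measurable (p g))
    (σ : ι → Equiv.Perm G) (h : ∀ j g, T ∘ p g ∘ φ j = p (σ j g)) :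
    MeasurePreserving T (∑ g, m.map (p g)) (∑ g, m.map (p g)) := by
  refine ⟨hT, ?_⟩
  have hbranch (g : G) :
      (m.map (p g)).map T = (Fintype.card ι : ℝ≥0∞)⁻¹ • ∑ j, m.map (p (σ j g)) := by
    rw [Measure.map_map hT (hp g)]
    conv_lhs => rw [hm]
    rw [Measure.map_smul, Measure.map_finset_sum (hT.comp (hp g)).aemeasurable]
    simp_rw [Measure.map_map (hT.comp (hp g)) (hφ _), comp_assoc, h]
  calc (∑ g, m.map (p g)).map T
      = ∑ g, (Fintype.card ι : ℝ≥0∞)⁻¹ • ∑ j, m.map (p (σ j g)) := by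
        simp_rw [Measure.map_finset_sum hT.aemeasurable, hbranch]
    _ = (Fintype.card ι : ℝ≥0∞)⁻¹ • ∑ j, ∑ g, m.map (p (σ j g)) := by
        rw [← Finset.smul_sum, Finset.sum_comm]
    _ = (Fintype.card ι : ℝ≥0∞)⁻¹ • ∑ _j : ι, ∑ g, m.map (p g) := by
        simp_rw [fun j => Equiv.sum_comp (σ j) fun g => m.map (p g)]
    _ = ∑ g, m.map (p g) := by
        rw [Finset.sum_const, Finset.card_univ, ← Nat.cast_smul_eq_nsmul ℝ≥0∞, smul_smul,
          ENNReal.inv_mul_cancel (by simp) (by simp), one_smul]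

theorem map_restrict_eq_sum_restrict_image {Γ : Type*} [AddGroup Γ] [AddAction Γ α] [Countable Γ]
    [MeasurableConstVAdd Γ α] [StandardBorelSpace α] [MeasurableSpace.CountablySeparated β]
    {μ : Measure α} [VAddInvariantMeasure Γ α μ] {F : Set α} (hF : IsAddFundamentalDomain Γ F μ)
    (hFm : MeasurableSet F) {p : α → β} (hp : Measurable p) (hpΓ : ∀ (γ : Γ) x, p (γ +ᵥ x) = p x)
    (hpF : InjOn p F) {C : Set α} (hC : MeasurableSet C) :
    (μ.restrict C).map p =
      Measure.sum fun γ : Γ => ((μ.restrict F).map p).restrict (p '' ((γ +ᵥ C) ∩ F)) := by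
  have himage (γ : Γ) : MeasurableSet (p '' ((γ +ᵥ C) ∩ F)) :=
    ((hC.const_vadd γ).inter hFm).image_of_measurable_injOn hp (hpF.mono inter_subset_right)
  have hpre (γ : Γ) (B : Set β) : p ⁻¹' (B ∩ p '' ((γ +ᵥ C) ∩ F)) ∩ F =
      (γ +ᵥ (p ⁻¹' B ∩ C)) ∩ F := by
    have hB : γ +ᵥ p ⁻¹' B = p ⁻¹' B := by
      ext x
      rw [mem_vadd_set_iff_neg_vadd_mem, mem_preimage, hpΓ, mem_preimage]
    rw [preimage_inter, inter_assoc, hpF.preimage_image_inter inter_subset_right, vadd_set_inter,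
      hB, inter_assoc]
  ext B hB
  rw [Measure.map_apply hp hB, Measure.restrict_apply (hp hB), hF.measure_eq_tsum,
    Measure.sum_apply _ hB]
  refine tsum_congr fun γ => ?_
  rw [Measure.restrict_apply hB, Measure.map_apply hp (hB.inter (himage γ)),
    Measure.restrict_apply (hp (hB.inter (himage γ))), hpre]

end

theorem dense_iUnion_preimage_iterate {X : Type*} [MetricSpace X] {e : X ≃ X} {r : ℝ≥0}
    (he : ContractingWith r e.symm) {S : Set X} {R : ℝ} (hS : ∀ x, ∃ s ∈ S, dist x s ≤ R) :
    Dense (⋃ n, e^[n] ⁻¹' S) := by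
  refine Metric.dense_iff.2 fun x ε hε => ?_
  have hlim : Filter.Tendsto (fun n : ℕ => (r : ℝ) ^ n * R) Filter.atTop (nhds 0) := by
    simpa using (tendsto_pow_atTop_nhds_zero_of_lt_one r.2 he.1).mul_const R
  obtain ⟨n, hn⟩ := (hlim.eventually_lt_const hε).exists
  obtain ⟨s, hs, hdist⟩ := hS (e^[n] x)
  refine ⟨e.symm^[n] s, ?_, mem_iUnion.2 ⟨n, ?_⟩⟩
  · calc dist (e.symm^[n] s) x = dist (e.symm^[n] (e^[n] x)) (e.symm^[n] s) := by
          rw [e.leftInverse_symm.iterate n x, dist_comm]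
      _ ≤ r ^ n * dist (e^[n] x) s := by simpa using (he.2.iterate n).dist_le_mul _ _
      _ ≤ r ^ n * R := by gcongr
      _ < ε := hn
  · rwa [mem_preimage, e.rightInverse_symm.iterate n s]

theorem isAddFundamentalDomain_op {V : Type*} [AddCommGroup V] [MeasurableSpace V] {μ : Measure V}
    {Γ : AddSubgroup V} {F : Set V} (hF : IsAddFundamentalDomain Γ F μ) :
    IsAddFundamentalDomain Γ.op F μ :=
  hF.preimage_of_equiv (f := id) (.id μ) Γ.equivOp.bijective fun γ x => add_comm x (γ : V)

section TorusEnd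

variable {E : Type*} [NormedAddCommGroup E] [NormedSpace ℝ E]

/-- The endomorphism of the torus `E ⧸ L` induced by a linear automorphism mapping `L` to itself. -/
def torusEnd (L : Submodule ℤ E) (A : E ≃ₗ[ℝ] E) (hAL : ∀ l ∈ L, A l ∈ L) :
    E ⧸ L.toAddSubgroup →+ E ⧸ L.toAddSubgroup :=
  QuotientAddGroup.map _ _ (A : E →+ E) hAL

theorem continuous_torusEnd [FiniteDimensional ℝ E] {L : Submodule ℤ E} {A : E ≃ₗ[ℝ] E}
    (hAL : ∀ l ∈ L, A l ∈ L) : Continuous (torusEnd L A hAL) :=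
  (QuotientAddGroup.continuous_mk.comp
    A.toLinearMap.continuous_of_finiteDimensional).quotient_lift _

end TorusEnd

section Lattice

variable {E : Type*} [NormedAddCommGroup E] [NormedSpace ℝ E] [FiniteDimensional ℝ E]
  (L : Submodule ℤ E) [DiscreteTopology L] [IsZLattice ℝ L]

/-- A fundamental parallelepiped of the lattice `L`: the half-open cell of a `ℤ`-basis of `L` chosen
arbitrarily. -/
noncomputable def latticeCell : Set E :=
  ZSpan.fundamentalDomain ((Free.chooseBasis ℤ L).ofZLatticeBasis ℝ L)

theorem exists_sub_mem_latticeCell (x : E) : ∃ l ∈ L, x - l ∈ latticeCell L := by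
  let b := Free.chooseBasis ℤ L
  refine ⟨ZSpan.floor (b.ofZLatticeBasis ℝ L) x, ?_, ZSpan.fract_mem_fundamentalDomain _ x⟩
  exact (b.ofZLatticeBasis_span ℝ).le (ZSpan.floor (b.ofZLatticeBasis ℝ L) x).2

theorem isBounded_latticeCell : Bornology.IsBounded (latticeCell L) :=
  ZSpan.fundamentalDomain_isBounded _

theorem exists_forall_exists_mem_dist_le : ∃ R, ∀ x : E, ∃ l ∈ L, dist x l ≤ R := by
  obtain ⟨R, hR⟩ := (isBounded_latticeCell L).exists_norm_le
  refine ⟨R, fun x => ?_⟩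
  obtain ⟨l, hl, hx⟩ := exists_sub_mem_latticeCell L x
  exact ⟨l, hl, dist_eq_norm x l ▸ hR _ hx⟩

instance isClosed_coe_lattice : IsClosed (L.toAddSubgroup : Set E) :=
  have : DiscreteTopology L.toAddSubgroup := ‹DiscreteTopology L›
  AddSubgroup.isClosed_of_discrete

instance : CompactSpace (E ⧸ L.toAddSubgroup) where
  isCompact_univ := by
    have h := IsZLattice.isCompact_range_of_periodic L
      (QuotientAddGroup.mk : E → E ⧸ L.toAddSubgroup) QuotientAddGroup.continuous_mk
      fun z w hw => QuotientAddGroup.mk_add_of_mem z hw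
    rwa [QuotientAddGroup.mk_surjective.range_eq] at h

theorem injOn_mk_latticeCell :
    InjOn (QuotientAddGroup.mk : E → E ⧸ L.toAddSubgroup) (latticeCell L) := by
  intro x hx y hy hxy
  rw [← ZSpan.fract_eq_self.2 hx, ← ZSpan.fract_eq_self.2 hy, ZSpan.fract_eq_fract,
    Basis.ofZLatticeBasis_span]
  exact QuotientAddGroup.eq.1 hxy

theorem measurableSet_latticeCell [MeasurableSpace E] [BorelSpace E] :
    MeasurableSet (latticeCell L) :=
  ZSpan.fundamentalDomain_measurableSet _

theorem isAddFundamentalDomain_latticeCell [MeasurableSpace E] [BorelSpace E] (μ : Measure E) :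
    IsAddFundamentalDomain L.toAddSubgroup (latticeCell L) μ :=
  ZLattice.isAddFundamentalDomain (Free.chooseBasis ℤ L) μ

variable [MeasurableSpace E] (μ : Measure E)

/-- The measure induced by `μ` on the torus `E ⧸ L`, encoded as the push-forward of the restriction
of `μ` to `latticeCell L`. For Haar `μ` it is the Haar measure of total mass the covolume of `L`. -/
noncomputable def torusMeasure : Measure (E ⧸ L.toAddSubgroup) :=
  (μ.restrict (latticeCell L)).map QuotientAddGroup.mk

theorem torusMeasure_univ : torusMeasure L μ univ = μ (latticeCell L) := by
  rw [torusMeasure, Measure.map_apply QuotientAddGroup.measurable_coe .univ,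
    preimage_univ, Measure.restrict_apply_univ]

variable [BorelSpace E]

instance [IsFiniteMeasureOnCompacts μ] : IsFiniteMeasure (torusMeasure L μ) := by
  have : IsFiniteMeasure (μ.restrict (latticeCell L)) :=
    ⟨by simpa using (isBounded_latticeCell L).measure_lt_top⟩
  exact Measure.isFiniteMeasure_map _ _

instance [μ.IsAddHaarMeasure] : (torusMeasure L μ).IsAddHaarMeasure := by
  have hF := isAddFundamentalDomain_op (isAddFundamentalDomain_latticeCell L μ)
  have : HasAddFundamentalDomain L.toAddSubgroup.op E μ := ⟨_, hF⟩
  have : Countable L.toAddSubgroup := inferInstanceAs (Countable L)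
  have : AddQuotientMeasureEqMeasurePreimage μ (torusMeasure L μ) :=
    hF.addQuotientMeasureEqMeasurePreimage rfl
  exact AddQuotientMeasureEqMeasurePreimage.addHaarMeasure_quotient μ

theorem covolume_eq_torusMeasure_real_univ [μ.IsAddHaarMeasure] :
    ZLattice.covolume L μ = (torusMeasure L μ).real univ := by
  rw [ZLattice.covolume_eq_measure_fundamentalDomain L μ (isAddFundamentalDomain_latticeCell L μ),
    measureReal_def, measureReal_def, torusMeasure_univ]

theorem ergodic_torusEnd [μ.IsAddHaarMeasure] {A : E ≃ₗ[ℝ] E} {r : ℝ≥0}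
    (hA : ContractingWith r A.symm) (hAL : ∀ l ∈ L, A l ∈ L) :
    Ergodic (torusEnd L A hAL) (torusMeasure L μ) := by
  have hmk : Surjective (QuotientAddGroup.mk : E → E ⧸ L.toAddSubgroup) :=
    QuotientAddGroup.mk_surjective
  have hmap : Semiconj (QuotientAddGroup.mk : E → E ⧸ L.toAddSubgroup) A (torusEnd L A hAL) :=
    fun _ => rfl
  refine AddMonoidHom.ergodic_of_dense_iUnion_preimage_zero _ ?_ (continuous_torusEnd hAL) ?_
  · obtain ⟨R, hR⟩ := exists_forall_exists_mem_dist_le L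
    refine (hmk.denseRange.dense_image QuotientAddGroup.continuous_mk
      (dense_iUnion_preimage_iterate (e := A.toEquiv) hA hR)).mono ?_
    rw [image_iUnion]
    refine iUnion_mono fun n => ?_
    rintro _ ⟨x, hx, rfl⟩
    rw [mem_preimage, ← hmap.iterate_right n x]
    exact (QuotientAddGroup.eq_zero_iff _).2 hx
  · exact .of_comp (g := QuotientAddGroup.mk) (hmap.comp_eq ▸ hmk.comp A.surjective)

end Lattice

section OrbitSum

variable {E : Type*} [AddCommGroup E] [MeasurableSpace E] (L : Submodule ℤ E) (G : Type*) [Group G]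
  [Fintype G] [DistribMulAction G E]

/-- The projection of `m` to the torus `E ⧸ L` symmetrised over `G`: the sum of the push-forwards of
the translates `g • m`, not divided by the order of `G`. -/
noncomputable def orbitSum (m : Measure E) : Measure (E ⧸ L.toAddSubgroup) :=
  ∑ g : G, m.map (QuotientAddGroup.mk ∘ (g • ·))

theorem orbitSum_univ [MeasurableConstSMul G E] (m : Measure E) :
    orbitSum L G m univ = Fintype.card G * m univ := by
  have hterm (g : G) :
      m.map ((QuotientAddGroup.mk : E → E ⧸ L.toAddSubgroup) ∘ (g • ·)) univ = m univ := by
    rw [Measure.map_apply (QuotientAddGroup.measurable_coe.comp (measurable_const_smul g)) .univ,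
      preimage_univ]
  simp [orbitSum, hterm]

end OrbitSum

section Multiplicity

variable {E : Type*} [NormedAddCommGroup E] [NormedSpace ℝ E] [FiniteDimensional ℝ E]
  [MeasurableSpace E] [BorelSpace E]

theorem map_linearEquiv_symm_add_eq_smul (μ : Measure E) [μ.IsAddHaarMeasure] (A : E ≃ₗ[ℝ] E)
    {f : E → E} (hf : MeasurePreserving f μ μ) (v : E) :
    μ.map (fun z => A.symm (f z + v)) = ENNReal.ofReal |LinearMap.det (A : E →ₗ[ℝ] E)| • μ := by
  have hlin := Measure.map_linearMap_addHaar_eq_smul_addHaar μ A.symm.isUnit_det'.ne_zero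
  rw [LinearEquiv.det_coe_symm, inv_inv] at hlin
  have hcont : Continuous A.symm := A.symm.toLinearMap.continuous_of_finiteDimensional
  have htrans := (measurePreserving_add_right μ v).comp hf
  rw [← hlin]
  conv_rhs => rw [← htrans.map_eq]
  exact (Measure.map_map hcont.measurable htrans.measurable).symm

variable (L : Submodule ℤ E) [DiscreteTopology L]

theorem exists_map_mk_restrict_eq_sum_restrict [IsZLattice ℝ L] (μ : Measure E)
    [μ.IsAddHaarMeasure] (C : Set E) :
    ∃ S : L → Set (E ⧸ L.toAddSubgroup), (∀ l, MeasurableSet (S l)) ∧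
      (μ.restrict C).map QuotientAddGroup.mk =
        Measure.sum fun l => (torusMeasure L μ).restrict (S l) := by
  have hC := measurableSet_toMeasurable μ C
  have hcell := measurableSet_latticeCell L
  have hinj := injOn_mk_latticeCell L
  have hperiodic (l : L.toAddSubgroup) (x : E) :
      (QuotientAddGroup.mk (l +ᵥ x) : E ⧸ L.toAddSubgroup) = QuotientAddGroup.mk x :=
    QuotientAddGroup.eq.2 (by simp [AddSubgroup.vadd_def])
  have : Countable L.toAddSubgroup := inferInstanceAs (Countable L)
  rw [← Measure.restrict_toMeasurable_of_sFinite]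
  exact ⟨_, fun l =>
    ((hC.const_vadd (l : L.toAddSubgroup)).inter hcell).image_of_measurable_injOn
      QuotientAddGroup.measurable_coe (hinj.mono inter_subset_right),
    map_restrict_eq_sum_restrict_image (isAddFundamentalDomain_latticeCell L μ) hcell
      QuotientAddGroup.measurable_coe hperiodic hinj hC⟩

variable (G : Type*) [Group G] [Fintype G] [DistribMulAction G E] [MeasurableConstSMul G E]

theorem exists_orbitSum_restrict_eq_sum_restrict [IsZLattice ℝ L] (μ : Measure E)
    [μ.IsAddHaarMeasure] [SMulInvariantMeasure G E μ] (K : Set E) :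
    ∃ S : G × L → Set (E ⧸ L.toAddSubgroup), (∀ i, MeasurableSet (S i)) ∧
      orbitSum L G (μ.restrict K) = Measure.sum fun i => (torusMeasure L μ).restrict (S i) := by
  choose S hSm hS using fun g : G =>
    exists_map_mk_restrict_eq_sum_restrict L μ ((g • ·) '' K)
  have hterm (g : G) :
      (μ.restrict K).map ((QuotientAddGroup.mk : E → E ⧸ L.toAddSubgroup) ∘ (g • ·)) =
        Measure.sum fun l => (torusMeasure L μ).restrict (S g l) := by
    rw [← hS, ← ((measurePreserving_smul g μ).restrict_image_emb
      (measurableEmbedding_const_smul g) K).map_eq,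
      Measure.map_map QuotientAddGroup.measurable_coe (measurable_const_smul g)]
  refine ⟨fun i => S i.1 i.2, fun i => hSm i.1 i.2, ?_⟩
  simp_rw [orbitSum, hterm, ← Measure.sum_fintype, Measure.sum_sum]

variable {L G} {A : E ≃ₗ[ℝ] E} (hAL : ∀ l ∈ L, A l ∈ L) (hGL : ∀ (g : G), ∀ l ∈ L, g • l ∈ L)
  (hAG : ∀ (g : G) x, A (g • x) = g • A x) {ι : Type*} [Fintype ι] (u : ι → G) {v : ι → E}
  (hv : ∀ j, v j ∈ L)

include hGL hAG hv in
theorem measurePreserving_torusEnd_orbitSum [Nonempty ι] {m : Measure E}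
    (hm : m = (Fintype.card ι : ℝ≥0∞)⁻¹ • ∑ j, m.map fun z => A.symm (u j • z + v j)) :
    MeasurePreserving (torusEnd L A hAL) (orbitSum L G m) (orbitSum L G m) := by
  have hA : Continuous A.symm := A.symm.toLinearMap.continuous_of_finiteDimensional
  refine measurePreserving_sum_map
    (fun j => hA.measurable.comp ((measurable_const_smul _).add_const _)) hm
    (continuous_torusEnd hAL).measurable
    (fun g => QuotientAddGroup.measurable_coe.comp (measurable_const_smul g))
    (fun j => Equiv.mulRight (u j)) fun j g => funext fun z => ?_
  calc (QuotientAddGroup.mk (A (g • A.symm (u j • z + v j))) : E ⧸ L.toAddSubgroup)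
      = QuotientAddGroup.mk ((g * u j) • z + g • v j) := by
        rw [hAG, A.apply_symm_apply, smul_add, mul_smul]
    _ = QuotientAddGroup.mk ((g * u j) • z) := QuotientAddGroup.mk_add_of_mem _ (hGL g _ (hv j))

variable [IsZLattice ℝ L] {μ : Measure E} [μ.IsAddHaarMeasure] [SMulInvariantMeasure G E μ]
  {r : ℝ≥0} (hA : ContractingWith r A.symm)
  (hdet : |LinearMap.det (A : E →ₗ[ℝ] E)| = Fintype.card ι) {K : Set E} (hfin : μ K ≠ ∞)
  (hK : K = ⋃ j, (fun z => A.symm (u j • z + v j)) '' K)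

include hAL hGL hAG hv hA hdet hfin hK

theorem exists_nat_orbitSum_restrict_eq_smul_torusMeasure :
    ∃ n : ℕ, orbitSum L G (μ.restrict K) = (n : ℝ≥0∞) • torusMeasure L μ := by
  have : Nonempty ι := Fintype.card_pos_iff.1 (by
    have := abs_pos.2 A.isUnit_det'.ne_zero
    rw [hdet] at this
    exact_mod_cast this)
  have hemb (j : ι) : MeasurableEmbedding fun z => A.symm (u j • z + v j) :=
    A.symm.toContinuousLinearEquiv.toHomeomorph.measurableEmbedding.comp
      ((measurableEmbedding_addRight (v j)).comp (measurableEmbedding_const_smul (u j)))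
  have hself := restrict_eq_inv_card_smul_sum_map_restrict hemb (fun j => by
    rw [map_linearEquiv_symm_add_eq_smul μ A (measurePreserving_smul (u j) μ), hdet,
      ENNReal.ofReal_natCast]) hfin hK
  obtain ⟨S, hSm, hS⟩ := exists_orbitSum_restrict_eq_sum_restrict L G μ K
  have hac : orbitSum L G (μ.restrict K) ≪ torusMeasure L μ := by
    rw [hS]
    exact Measure.absolutelyContinuous_sum_left fun _ => Measure.absolutelyContinuous_restrict
  have hne : orbitSum L G (μ.restrict K) univ ≠ ∞ := by
    rw [orbitSum_univ, Measure.restrict_apply_univ]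
    exact ENNReal.mul_ne_top (ENNReal.natCast_ne_top _) hfin
  have : IsFiniteMeasure (orbitSum L G (μ.restrict K)) := ⟨hne.lt_top⟩
  obtain ⟨c, hc⟩ := (ergodic_torusEnd L μ hA hAL).eq_smul_of_absolutelyContinuous
    (measurePreserving_torusEnd_orbitSum hAL hGL hAG u hv hself) hac
  have hctop : c ≠ ∞ := by
    rintro rfl
    rw [hc, Measure.smul_apply, smul_eq_mul, ENNReal.top_mul NeZero.out] at hne
    exact hne rfl
  obtain ⟨n, rfl⟩ := exists_eq_natCast_of_smul_eq_sum_restrict hSm hctop (hc.symm.trans hS)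
  exact ⟨n, hc⟩

theorem exists_nat_card_mul_measureReal_eq_mul_covolume :
    ∃ n : ℕ, Fintype.card G * μ.real K = n * ZLattice.covolume L μ := by
  obtain ⟨n, hn⟩ :=
    exists_nat_orbitSum_restrict_eq_smul_torusMeasure hAL hGL hAG u hv hA hdet hfin hK
  refine ⟨n, ?_⟩
  have h := congr_arg (fun m => m.real univ) hn
  simpa [measureReal_def, orbitSum_univ, covolume_eq_torusMeasure_real_univ] using h

end Multiplicity

section Gaussian

/-- The basis `2, 2i` of `ℂ`, which spans the lattice `2ℤ[i]`. -/
noncomputable def doubleGaussianBasis : Basis (Fin 2) ℝ ℂ :=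
  Complex.basisOneI.unitsSMul fun _ => Units.mk0 2 two_ne_zero

/-- The lattice `2ℤ[i]` of `ℂ`. -/
noncomputable abbrev doubleGaussianLattice : Submodule ℤ ℂ :=
  Submodule.span ℤ (range doubleGaussianBasis)

theorem mem_doubleGaussianLattice {z : ℂ} :
    z ∈ doubleGaussianLattice ↔ ∃ γ : GaussianInt, z = 2 * γ := by
  have hcomb (c : Fin 2 → ℤ) :
      ∑ i, c i • doubleGaussianBasis i = 2 * ((⟨c 0, c 1⟩ : GaussianInt) : ℂ) := by
    rw [Fin.sum_univ_two, GaussianInt.toComplex_def, mul_add, mul_left_comm]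
    simp [doubleGaussianBasis, Basis.unitsSMul_apply, Units.smul_def, mul_comm]
  rw [Submodule.mem_span_range_iff_exists_fun]
  constructor
  · rintro ⟨c, rfl⟩
    exact ⟨⟨c 0, c 1⟩, hcomb c⟩
  · rintro ⟨γ, rfl⟩
    exact ⟨![γ.re, γ.im], hcomb _⟩

theorem gaussianInt_mul_mem_doubleGaussianLattice (γ : GaussianInt) {z : ℂ}
    (hz : z ∈ doubleGaussianLattice) : γ * z ∈ doubleGaussianLattice := by
  obtain ⟨δ, rfl⟩ := mem_doubleGaussianLattice.1 hz
  exact mem_doubleGaussianLattice.2 ⟨γ * δ, by rw [GaussianInt.toComplex_mul, mul_left_comm]⟩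

theorem covolume_doubleGaussianLattice : ZLattice.covolume doubleGaussianLattice = 4 := by
  have hunit : volume.real (ZSpan.fundamentalDomain Complex.basisOneI) = 1 := by
    rw [measureReal_congr (ZSpan.fundamentalDomain_ae_parallelepiped _ volume),
      ← Complex.toBasis_orthonormalBasisOneI, OrthonormalBasis.coe_toBasis, measureReal_def,
      OrthonormalBasis.volume_parallelepiped, ENNReal.toReal_one]
  rw [ZLattice.covolume_eq_measure_fundamentalDomain _ _
      (ZSpan.isAddFundamentalDomain doubleGaussianBasis volume),
    ZSpan.measureReal_fundamentalDomain _ _ Complex.basisOneI, hunit, doubleGaussianBasis,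
    Basis.det_unitsSMul_self]
  norm_num

theorem exists_gaussianInt_eq_of_pow_four_eq_one {z : ℂ} (hz : z ^ 4 = 1) :
    ∃ γ : GaussianInt, (γ : ℂ) = z := by
  have hfactor : (z - 1) * (z + 1) * ((z - Complex.I) * (z + Complex.I)) = 0 := by
    linear_combination hz + (1 - z ^ 2) * Complex.I_sq
  simp only [mul_eq_zero, sub_eq_zero, add_eq_zero_iff_eq_neg] at hfactor
  rcases hfactor with (rfl | rfl) | (rfl | rfl)
  exacts [⟨1, by simp⟩, ⟨-1, by simp⟩, ⟨⟨0, 1⟩, by simp [GaussianInt.toComplex_def]⟩,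
    ⟨⟨0, -1⟩, by simp [GaussianInt.toComplex_def]⟩]

instance (n : ℕ) [NeZero n] : SMulInvariantMeasure (rootsOfUnity n ℂ) ℂ volume := by
  refine ⟨fun g s hs => ?_⟩
  let u : Circle := ⟨(g : ℂˣ), mem_sphere_zero_iff_norm.2
    (Complex.norm_eq_one_of_mem_rootsOfUnity g.2)⟩
  exact (rotation u).measurePreserving.measure_preimage hs.nullMeasurableSet

/-- Multiplication by `α ≠ 0` as an `ℝ`-linear automorphism of `ℂ`. -/
noncomputable def mulEquiv (α : ℂ) (hα : α ≠ 0) : ℂ ≃ₗ[ℝ] ℂ :=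
  (LinearEquiv.smulOfNeZero ℂ ℂ α hα).restrictScalars ℝ

theorem mulEquiv_apply {α : ℂ} (hα : α ≠ 0) (z : ℂ) : mulEquiv α hα z = α * z := rfl

theorem mulEquiv_symm_apply {α : ℂ} (hα : α ≠ 0) (z : ℂ) : (mulEquiv α hα).symm z = α⁻¹ * z := by
  rw [LinearEquiv.symm_apply_eq, mulEquiv_apply, mul_inv_cancel_left₀ hα]

theorem det_mulEquiv {α : ℂ} (hα : α ≠ 0) :
    LinearMap.det (mulEquiv α hα : ℂ →ₗ[ℝ] ℂ) = Complex.normSq α := by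
  rw [← Algebra.norm_complex_apply, Algebra.norm_apply]
  rfl

theorem contractingWith_mulEquiv_symm {α : ℂ} (hα : 1 < ‖α‖) :
    ContractingWith ‖α‖₊⁻¹ (mulEquiv α (norm_pos_iff.1 (one_pos.trans hα))).symm := by
  refine ⟨inv_lt_one_of_one_lt₀ hα, LipschitzWith.of_dist_le_mul fun z w => ?_⟩
  simp [mulEquiv_symm_apply, dist_eq_norm, ← mul_sub]

end Gaussian

theorem attractor_volume_integer_general {ι : Type*} [Fintype ι] {α : GaussianInt}
    (hα : 1 < α.norm) (hcard : (Fintype.card ι : ℤ) = α.norm) {μ β : ι → ℂ}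
    (hμ : ∀ j, (α * μ j) ^ 4 = 1) (hβ : ∀ j, ∃ γ : GaussianInt, α * β j = 2 * γ) {K : Set ℂ}
    (hfin : volume K ≠ ∞) (hK : K = ⋃ j, (fun z => μ j * z + β j) '' K) :
    ∃ m : ℕ, volume K = m := by
  have hnormSq : Complex.normSq α = Fintype.card ι := by
    rw [← GaussianInt.intCast_real_norm, ← hcard, Int.cast_natCast]
  have hnorm : 1 < ‖(α : ℂ)‖ := by
    rw [← one_lt_sq_iff₀ (norm_nonneg _), Complex.sq_norm, ← GaussianInt.intCast_real_norm]
    exact_mod_cast hα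
  have hα0 : (α : ℂ) ≠ 0 := norm_pos_iff.1 (one_pos.trans hnorm)
  let u (j : ι) : rootsOfUnity 4 ℂ := rootsOfUnity.mkOfPowEq (α * μ j) (hμ j)
  have hself : K = ⋃ j, (fun z => (mulEquiv α hα0).symm (u j • z + α * β j)) '' K := by
    have hbranch (j : ι) (z : ℂ) :
        (mulEquiv α hα0).symm (u j • z + α * β j) = μ j * z + β j := by
      rw [LinearEquiv.symm_apply_eq, mulEquiv_apply, mul_add, ← mul_assoc]
      rfl
    simpa only [hbranch] using hK
  have : Fintype (rootsOfUnity 4 ℂ) := Fintype.ofFinite _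
  obtain ⟨n, hn⟩ := exists_nat_card_mul_measureReal_eq_mul_covolume (L := doubleGaussianLattice)
    (fun l hl => gaussianInt_mul_mem_doubleGaussianLattice α hl)
    (fun g l hl => by
      obtain ⟨γ, hγ⟩ := exists_gaussianInt_eq_of_pow_four_eq_one
        ((mem_rootsOfUnity' 4 (g : ℂˣ)).1 g.2)
      rw [Subgroup.smul_def, Units.smul_def, smul_eq_mul, ← hγ]
      exact gaussianInt_mul_mem_doubleGaussianLattice γ hl)
    (fun g z => mul_smul_comm g (α : ℂ) z) u (fun j => mem_doubleGaussianLattice.2 (hβ j))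
    (contractingWith_mulEquiv_symm hnorm) (by rw [det_mulEquiv, hnormSq, Nat.abs_cast]) hfin hself
  rw [← Nat.card_eq_fintype_card, Complex.card_rootsOfUnity, covolume_doubleGaussianLattice] at hn
  refine ⟨n, ?_⟩
  rw [← ENNReal.ofReal_toReal hfin, ← ENNReal.ofReal_natCast]
  congr 1
  rw [measureReal_def] at hn
  push_cast at hn
  linarith

theorem coe_one_add_i_mul_pow_four {μ : ℂ}
    (hμ : μ ∈ ({(1 + Complex.I) / 2, (1 - Complex.I) / 2,
                  (-1 + Complex.I) / 2, (-1 - Complex.I) / 2} : Set ℂ)) :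
    (((⟨1, 1⟩ : GaussianInt) : ℂ) * μ) ^ 4 = 1 := by
  have hI : Complex.I ^ 2 = -1 := Complex.I_sq
  rw [GaussianInt.toComplex_def', Int.cast_one, one_mul]
  rcases hμ with rfl | rfl | rfl | rfl <;> grind

theorem exists_coe_one_add_i_mul_eq_two_mul {β : ℂ}
    (hβ : ∃ a b : ℤ, β = (1 + Complex.I) * ((a : ℂ) + (b : ℂ) * Complex.I)) :
    ∃ γ : GaussianInt, ((⟨1, 1⟩ : GaussianInt) : ℂ) * β = 2 * γ := by
  obtain ⟨a, b, rfl⟩ := hβ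
  refine ⟨⟨-b, a⟩, ?_⟩
  simp only [GaussianInt.toComplex_def', Int.cast_one, Int.cast_neg, one_mul]
  linear_combination (a + b * Complex.I + 2 * b) * Complex.I_sq

/-- Instance of the Multiplicity Theorem for the Lattès map: for any
multipliers `μ₁, μ₂ ∈ {(1±i)/2, (-1±i)/2}` and translations
`β₁, β₂ ∈ (1+i)ℤ[i]`, the attractor of `gⱼ(z) = μⱼ z + βⱼ` has
two-dimensional Lebesgue measure equal to a nonnegative integer. -/
theorem attractor_volume_integer (μ₁ μ₂ : ℂ)
    (hμ₁ : μ₁ ∈ ({(1 + Complex.I) / 2, (1 - Complex.I) / 2,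
                  (-1 + Complex.I) / 2, (-1 - Complex.I) / 2} : Set ℂ))
    (hμ₂ : μ₂ ∈ ({(1 + Complex.I) / 2, (1 - Complex.I) / 2,
                  (-1 + Complex.I) / 2, (-1 - Complex.I) / 2} : Set ℂ))
    (β₁ β₂ : ℂ)
    (hβ₁ : ∃ a b : ℤ, β₁ = (1 + Complex.I) * ((a : ℂ) + (b : ℂ) * Complex.I))
    (hβ₂ : ∃ a b : ℤ, β₂ = (1 + Complex.I) * ((a : ℂ) + (b : ℂ) * Complex.I))
    (K : Set ℂ) (hne : K.Nonempty) (hc : IsCompact K)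
    (hK : K = (fun z : ℂ => μ₁ * z + β₁) '' K ∪
              (fun z : ℂ => μ₂ * z + β₂) '' K) :
    ∃ m : ℕ, volume K = (m : ENNReal) := by
  refine attractor_volume_integer_general (ι := Fin 2) (α := ⟨1, 1⟩) (μ := ![μ₁, μ₂])
    (β := ![β₁, β₂]) (by decide) (by decide) ?_ ?_ hc.measure_lt_top.ne ?_
  · exact Fin.forall_fin_two.2 ⟨coe_one_add_i_mul_pow_four hμ₁, coe_one_add_i_mul_pow_four hμ₂⟩
  · exact Fin.forall_fin_two.2
      ⟨exists_coe_one_add_i_mul_eq_two_mul hβ₁, exists_coe_one_add_i_mul_eq_two_mul hβ₂⟩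
  · exact hK.trans (by ext z; simp only [mem_union, mem_iUnion, Fin.exists_fin_two]; rfl)
end
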